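/- Let n ≥ 1 be an integer and δ ∈ (0, n]. For every f ∈ BLO(ℝⁿ, ℋ^δ_∞) there exist a constant α ∈ [0, ∞), a function b ∈ L^∞(ℝⁿ, ℋ^δ_∞), and a function g ∈ L¹_loc(ℝⁿ, ℋ^δ_∞) such that f(x) = α · ln(M_{ℋ^δ_∞} g(x)) + b(x) for ℋ^δ_∞-a.e. x ∈ ℝⁿ. -/

import Mathlib

open scoped ENNReal
open Set MeasureTheory

noncomputable section

/-- An axis-parallel cube in `ℝⁿ`, described by its lower corner and positive side length. -/
structure Cube (n : ℕ) where
  corner : Fin n → ℝ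
  side : ℝ
  side_pos : 0 < side

namespace Cube

/-- The half-open cube `∏ᵢ [cornerᵢ, cornerᵢ + side)` as a set of points. -/
def toSet {n : ℕ} (Q : Cube n) : Set (Fin n → ℝ) :=
  {x | ∀ i, Q.corner i ≤ x i ∧ x i < Q.corner i + Q.side}

/-- A cube is dyadic if it has the form `2^k·(z + [0,1)ⁿ)` with `k ∈ ℤ`, `z ∈ ℤⁿ`. -/
def IsDyadic {n : ℕ} (Q : Cube n) : Prop :=
  ∃ (k : ℤ) (z : Fin n → ℤ), Q.side = (2:ℝ) ^ k ∧ ∀ i, Q.corner i = (z i : ℝ) * (2:ℝ) ^ k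

/-- `Q'` is a dyadic subcube of `Q`, i.e. obtained from `Q` by repeated bisection. -/
def IsDyadicSubcube {n : ℕ} (Q' Q : Cube n) : Prop :=
  ∃ (k : ℕ) (z : Fin n → ℕ), (∀ i, z i < 2 ^ k) ∧
    Q'.side = Q.side / 2 ^ k ∧ ∀ i, Q'.corner i = Q.corner i + (z i : ℝ) * (Q.side / 2 ^ k)

/-- The concentric dilate `t·Q` of a cube. -/
def dilate {n : ℕ} (Q : Cube n) (t : ℝ) (ht : 0 < t) : Cube n :=
  ⟨fun i => Q.corner i + Q.side / 2 - t * Q.side / 2, t * Q.side, mul_pos ht Q.side_pos⟩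

end Cube

/-- The Hausdorff content `ℋ^δ_∞`. -/
def hContent (n : ℕ) (δ : ℝ) (E : Set (Fin n → ℝ)) : ℝ≥0∞ :=
  ⨅ (Qs : ℕ → Cube n) (_ : E ⊆ ⋃ i, (Qs i).toSet), ∑' i, ENNReal.ofReal ((Qs i).side ^ δ)

/-- The dyadic Hausdorff content `~ℋ^δ_∞`. -/
def dContent (n : ℕ) (δ : ℝ) (E : Set (Fin n → ℝ)) : ℝ≥0∞ :=
  ⨅ (Qs : ℕ → Cube n) (_ : (∀ i, (Qs i).IsDyadic) ∧ E ⊆ ⋃ i, (Qs i).toSet),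
    ∑' i, ENNReal.ofReal ((Qs i).side ^ δ)

/-- The Choquet integral `∫_E f dℋ^δ_∞`. -/
def integH (n : ℕ) (δ : ℝ) (f : (Fin n → ℝ) → ℝ) (E : Set (Fin n → ℝ)) : ℝ≥0∞ :=
  ∫⁻ t in Ioi (0:ℝ), hContent n δ {x | x ∈ E ∧ t < f x}

/-- The Choquet integral `∫_E f d~ℋ^δ_∞` w.r.t. the dyadic Hausdorff content. -/
def integD (n : ℕ) (δ : ℝ) (f : (Fin n → ℝ) → ℝ) (E : Set (Fin n → ℝ)) : ℝ≥0∞ :=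
  ∫⁻ t in Ioi (0:ℝ), dContent n δ {x | x ∈ E ∧ t < f x}

/-- A property holds `ℋ^δ_∞`-a.e. -/
def AEContent (n : ℕ) (δ : ℝ) (P : (Fin n → ℝ) → Prop) : Prop :=
  hContent n δ {x | ¬ P x} = 0

/-- `ℋ^δ_∞`-quasicontinuity. -/
def QuasiCont (n : ℕ) (δ : ℝ) (f : (Fin n → ℝ) → ℝ) : Prop :=
  ∀ ε : ℝ, 0 < ε → ∃ O : Set (Fin n → ℝ),
    IsOpen O ∧ hContent n δ O < ENNReal.ofReal ε ∧ ContinuousOn f Oᶜ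

/-- `L¹_loc(ℝⁿ, ℋ^δ_∞)`. -/
def MemL1loc (n : ℕ) (δ : ℝ) (f : (Fin n → ℝ) → ℝ) : Prop :=
  QuasiCont n δ f ∧ ∀ K : Set (Fin n → ℝ), IsCompact K → integH n δ (fun x => |f x|) K < ⊤

/-- `L^∞(ℝⁿ, ℋ^δ_∞)`. -/
def MemLinf (n : ℕ) (δ : ℝ) (f : (Fin n → ℝ) → ℝ) : Prop :=
  QuasiCont n δ f ∧ ∃ M : ℝ, AEContent n δ (fun x => |f x| ≤ M)

/-- The `BMO(ℝⁿ, ℋ^δ_∞)` seminorm. -/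
def bmoNorm (n : ℕ) (δ : ℝ) (f : (Fin n → ℝ) → ℝ) : ℝ≥0∞ :=
  ⨆ Q : Cube n, ⨅ c : ℝ,
    integH n δ (fun x => |f x - c|) Q.toSet / hContent n δ Q.toSet

/-- Membership in `BMO(ℝⁿ, ℋ^δ_∞)`. -/
def MemBMO (n : ℕ) (δ : ℝ) (f : (Fin n → ℝ) → ℝ) : Prop :=
  MemL1loc n δ f ∧ bmoNorm n δ f < ⊤

/-- `essinf_{x ∈ Q} f := inf {t ∈ (0,∞) : ℋ^δ_∞({x ∈ Q : f x < t}) > 0}`. -/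
def essInfQ (n : ℕ) (δ : ℝ) (f : (Fin n → ℝ) → ℝ) (Q : Cube n) : ℝ :=
  sInf {t : ℝ | 0 < t ∧ 0 < hContent n δ {x | x ∈ Q.toSet ∧ f x < t}}

/-- The `BLO(ℝⁿ, ℋ^δ_∞)` seminorm. -/
def bloNorm (n : ℕ) (δ : ℝ) (f : (Fin n → ℝ) → ℝ) : ℝ≥0∞ :=
  ⨆ Q : Cube n,
    integH n δ (fun x => |f x - essInfQ n δ f Q|) Q.toSet / hContent n δ Q.toSet

/-- Membership in `BLO(ℝⁿ, ℋ^δ_∞)`. -/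
def MemBLO (n : ℕ) (δ : ℝ) (f : (Fin n → ℝ) → ℝ) : Prop :=
  MemL1loc n δ f ∧ bloNorm n δ f < ⊤

/-- A weight: locally Choquet-integrable, quasicontinuous, positive `ℋ^δ_∞`-a.e. -/
def IsWeight (n : ℕ) (δ : ℝ) (w : (Fin n → ℝ) → ℝ) : Prop :=
  MemL1loc n δ w ∧ AEContent n δ (fun x => 0 < w x)

/-- The capacitary Muckenhoupt `A_{p,δ}` constant, for `p > 1`. -/
def apConst (n : ℕ) (δ p : ℝ) (w : (Fin n → ℝ) → ℝ) : ℝ≥0∞ :=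
  ⨆ Q : Cube n,
    (integH n δ w Q.toSet / hContent n δ Q.toSet) *
      (integH n δ (fun x => w x ^ (-(1 / (p - 1)))) Q.toSet / hContent n δ Q.toSet) ^ (p - 1)

/-- Membership in `A_{p,δ}`, `p > 1`. -/
def MemAp (n : ℕ) (δ p : ℝ) (w : (Fin n → ℝ) → ℝ) : Prop :=
  IsWeight n δ w ∧ apConst n δ p w < ⊤

/-- The Hardy–Littlewood maximal operator w.r.t. `ℋ^δ_∞`. -/
def maxOp (n : ℕ) (δ : ℝ) (g : (Fin n → ℝ) → ℝ) (x : Fin n → ℝ) : ℝ≥0∞ :=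
  ⨆ (Q : Cube n) (_ : x ∈ Q.toSet),
    integH n δ (fun y => |g y|) Q.toSet / hContent n δ Q.toSet

/-- The capacitary `A_{1,δ}` constant. -/
def a1Const (n : ℕ) (δ : ℝ) (w : (Fin n → ℝ) → ℝ) : ℝ≥0∞ :=
  sInf {c : ℝ≥0∞ | 0 < c ∧
    AEContent n δ (fun x => maxOp n δ w x ≤ c * ENNReal.ofReal (w x))}

/-- Membership in `A_{1,δ}`. -/
def MemA1 (n : ℕ) (δ : ℝ) (w : (Fin n → ℝ) → ℝ) : Prop :=
  IsWeight n δ w ∧ a1Const n δ w < ⊤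

/-- The `A_{p,δ}` constant for `p ∈ [1,∞)` (it is the `A_{1,δ}` constant when `p = 1`). -/
def apConstGen (n : ℕ) (δ p : ℝ) (w : (Fin n → ℝ) → ℝ) : ℝ≥0∞ :=
  if p = 1 then a1Const n δ w else apConst n δ p w

/-- Membership in `A_{p,δ}` for `p ∈ [1,∞)` (meaning `A_{1,δ}` when `p = 1`). -/
def MemApGen (n : ℕ) (δ p : ℝ) (w : (Fin n → ℝ) → ℝ) : Prop :=
  IsWeight n δ w ∧ apConstGen n δ p w < ⊤

/-- The weighted `BMO^q_w(ℝⁿ, ℋ^δ_∞)` seminorm. -/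
def bmoWNorm (n : ℕ) (δ q : ℝ) (w f : (Fin n → ℝ) → ℝ) : ℝ≥0∞ :=
  ⨆ Q : Cube n, ⨅ c : ℝ,
    (integH n δ (fun x => |f x - c| ^ q * w x) Q.toSet / integH n δ w Q.toSet) ^ (1 / q)

/-- Membership in `BMO^q_w(ℝⁿ, ℋ^δ_∞)`. -/
def MemBMOw (n : ℕ) (δ q : ℝ) (w f : (Fin n → ℝ) → ℝ) : Prop :=
  QuasiCont n δ f ∧
    (∀ K : Set (Fin n → ℝ), IsCompact K → integH n δ (fun x => |f x| ^ q * w x) K < ⊤) ∧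
    bmoWNorm n δ q w f < ⊤

/-- The integral average `f_{Q,δ}` with respect to the dyadic Hausdorff content. -/
def avgQ (n : ℕ) (δ : ℝ) (f : (Fin n → ℝ) → ℝ) (Q : Cube n) : ℝ :=
  ((integD n δ f (Q.toSet ∩ {x | 0 ≤ f x})).toReal -
      (integD n δ (fun x => -f x) (Q.toSet ∩ {x | f x < 0})).toReal) /
    ((dContent n δ (Q.toSet ∩ {x | 0 ≤ f x})).toReal +
      (dContent n δ (Q.toSet ∩ {x | f x < 0})).toReal)

/-!
Replacing `f` by its positive part changes no essential infimum and does not increase the BLO norm.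
For `f ≥ 0`, selecting the maximal dyadic cubes on which the essential infimum of `f` exceeds a
height `a` shows that the content of `{f > a}` in a cube is halved each time `a` grows by a fixed
amount. So `f` exceeds its essential infimum with exponentially small content (John–Nirenberg), and
for some `ε > 0` the average of `exp (ε f)` over any cube `Q` is at most `4 exp (ε essinf_Q f)`.
Hence `g := exp (ε f)` satisfies `g ≤ M g ≤ 4 g` at every point of
approximate continuity, and `f - ε⁻¹ log (M g)` is bounded there.

The content is not additive, so Lebesgue differentiation is not available; approximate continuity
comes instead from quasicontinuity, the weak-type bound showing that the exceptional open sets are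
thin on every scale off a set of small content. The same thinness controls `M g` on small cubes,
which gives its upper semicontinuity off that set, while its lower semicontinuity holds everywhere;
so `log (M g)` is quasicontinuous, and with it the remainder.
-/

section Cubes

variable {n : ℕ} {δ : ℝ}

namespace Cube

/-- The cost `ℓ(Q)^δ` of a cube `Q` in a covering. -/
def size (δ : ℝ) (Q : Cube n) : ℝ≥0∞ := ENNReal.ofReal (Q.side ^ δ)

lemma size_pos (Q : Cube n) : 0 < Q.size δ :=
  ENNReal.ofReal_pos.2 (Real.rpow_pos_of_pos Q.side_pos δ)

lemma size_ne_zero (Q : Cube n) : Q.size δ ≠ 0 := Q.size_pos.ne'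

lemma size_ne_top (Q : Cube n) : Q.size δ ≠ ⊤ := ENNReal.ofReal_ne_top

lemma size_le_mul (hδ : 0 ≤ δ) {P Q : Cube n} {c : ℝ} (hc : 0 ≤ c) (h : P.side ≤ c * Q.side) :
    P.size δ ≤ ENNReal.ofReal (c ^ δ) * Q.size δ := by
  rw [size, size, ← ENNReal.ofReal_mul (by positivity), ← Real.mul_rpow hc Q.side_pos.le]
  exact ENNReal.ofReal_le_ofReal (Real.rpow_le_rpow P.side_pos.le h hδ)

lemma size_mono (hδ : 0 ≤ δ) {P Q : Cube n} (h : P.side ≤ Q.side) : P.size δ ≤ Q.size δ :=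
  ENNReal.ofReal_le_ofReal (Real.rpow_le_rpow P.side_pos.le h hδ)

lemma size_dilate (Q : Cube n) {t : ℝ} (ht : 0 < t) :
    (Q.dilate t ht).size δ = ENNReal.ofReal (t ^ δ) * Q.size δ := by
  rw [size, size, ← ENNReal.ofReal_mul (by positivity), ← Real.mul_rpow ht.le Q.side_pos.le, dilate]

lemma corner_mem (Q : Cube n) : Q.corner ∈ Q.toSet :=
  fun _ ↦ ⟨le_rfl, lt_add_of_pos_right _ Q.side_pos⟩

lemma dist_lt_side {Q : Cube n} {x y : Fin n → ℝ} (hx : x ∈ Q.toSet) (hy : y ∈ Q.toSet) :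
    dist x y < Q.side := by
  refine (dist_pi_lt_iff Q.side_pos).2 fun i ↦ ?_
  rw [Real.dist_eq, abs_sub_lt_iff]
  constructor <;> linarith [(hx i).1, (hx i).2, (hy i).1, (hy i).2]

lemma mem_dilate_of_dist_le {Q : Cube n} {x y : Fin n → ℝ} {t : ℝ} (ht : 0 < t) (hx : x ∈ Q.toSet)
    (h : dist x y ≤ (t - 1) / 2 * Q.side) : y ∈ (Q.dilate t ht).toSet := by
  intro i
  have hxy := abs_le.1 (Real.dist_eq (x i) (y i) ▸ (dist_le_pi_dist x y i).trans h)
  simp only [dilate]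
  constructor <;> linarith [(hx i).1, (hx i).2, hxy.1, hxy.2]

lemma subset_dilate (Q : Cube n) {t : ℝ} (ht : 1 ≤ t) :
    Q.toSet ⊆ (Q.dilate t (zero_lt_one.trans_le ht)).toSet := fun x hx ↦
  mem_dilate_of_dist_le _ hx <| by
    rw [dist_self]
    exact mul_nonneg (by linarith) Q.side_pos.le

lemma subset_interior_dilate (Q : Cube n) {t : ℝ} (ht : 1 < t) :
    Q.toSet ⊆ interior (Q.dilate t (zero_lt_one.trans ht)).toSet := fun x hx ↦
  mem_interior_iff_mem_nhds.2 <| Metric.mem_nhds_iff.2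
    ⟨(t - 1) / 2 * Q.side, mul_pos (by linarith) Q.side_pos, fun _ hy ↦
      mem_dilate_of_dist_le _ hx (dist_comm x _ ▸ (Metric.mem_ball.1 hy).le)⟩

lemma subset_dilate_three {P Q : Cube n} (hPQ : (P.toSet ∩ Q.toSet).Nonempty)
    (h : Q.side ≤ P.side) : Q.toSet ⊆ (P.dilate 3 three_pos).toSet := by
  obtain ⟨x, hxP, hxQ⟩ := hPQ
  exact fun y hy ↦ mem_dilate_of_dist_le _ hxP (by linarith [dist_lt_side hxQ hy])

lemma exists_superset_of_isBounded {K : Set (Fin n → ℝ)} (hK : Bornology.IsBounded K) :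
    ∃ Q : Cube n, K ⊆ Q.toSet := by
  obtain ⟨r, hr⟩ := hK.subset_ball 0
  refine ⟨⟨fun _ ↦ -max r 1, 2 * max r 1, by positivity⟩, fun x hx i ↦ ?_⟩
  have hxi := (norm_le_pi_norm x i).trans_lt (mem_ball_zero_iff.1 (hr hx))
  have h := abs_lt.1 (hxi.trans_le (le_max_left r 1))
  constructor <;> linarith [h.1, h.2]

lemma volume_toSet (Q : Cube n) : volume Q.toSet = ENNReal.ofReal Q.side ^ n := by
  have hpi : Q.toSet = Set.pi univ fun i ↦ Ico (Q.corner i) (Q.corner i + Q.side) := by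
    ext x
    simp [toSet]
  simp [hpi, Real.volume_pi_Ico]

lemma volume_mul_size_le (hδn : δ ≤ n) {P Q : Cube n} (h : P.side ≤ Q.side) :
    volume P.toSet * Q.size δ ≤ volume Q.toSet * P.size δ := by
  have hP := P.side_pos
  have hQ := Q.side_pos
  have key : P.side ^ (n : ℝ) * Q.side ^ δ ≤ Q.side ^ (n : ℝ) * P.side ^ δ := by
    calc P.side ^ (n : ℝ) * Q.side ^ δ
        = P.side ^ (n - δ) * (P.side ^ δ * Q.side ^ δ) := by
          rw [← mul_assoc, ← Real.rpow_add hP, sub_add_cancel]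
      _ ≤ Q.side ^ (n - δ) * (P.side ^ δ * Q.side ^ δ) := by
          have := Real.rpow_le_rpow hP.le h (sub_nonneg.2 hδn)
          gcongr
      _ = Q.side ^ (n : ℝ) * P.side ^ δ := by
          rw [mul_comm (P.side ^ δ), ← mul_assoc, ← Real.rpow_add hQ, sub_add_cancel]
  rw [volume_toSet, volume_toSet, size, size, ← ENNReal.ofReal_pow hP.le,
    ← ENNReal.ofReal_pow hQ.le, ← ENNReal.ofReal_mul (by positivity),
    ← ENNReal.ofReal_mul (by positivity)]
  exact ENNReal.ofReal_le_ofReal (by exact_mod_cast key)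

end Cube

end Cubes

section Content

variable {n : ℕ} {δ : ℝ} {E F : Set (Fin n → ℝ)}

/-- The cost of covering `E` by one cube; `hContent` is the outer measure it generates. -/
def singleCubeContent (n : ℕ) (δ : ℝ) (E : Set (Fin n → ℝ)) : ℝ≥0∞ :=
  ⨅ (Q : Cube n) (_ : E ⊆ Q.toSet), Q.size δ

lemma singleCubeContent_empty (hδ : 0 < δ) : singleCubeContent n δ ∅ = 0 := by
  refine le_antisymm (ENNReal.le_of_forall_pos_le_add fun ε hε _ ↦ ?_) bot_le
  refine (iInf₂_le (⟨0, ε ^ (1 / δ), by positivity⟩ : Cube n) (empty_subset _)).trans (le_of_eq ?_)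
  change ENNReal.ofReal (((ε : ℝ) ^ (1 / δ)) ^ δ) = 0 + ε
  rw [← Real.rpow_mul ε.coe_nonneg, one_div_mul_cancel hδ.ne', Real.rpow_one, zero_add,
    ENNReal.ofReal_coe_nnreal]

/-- `hContent` as a bundled outer measure. -/
def contentOuterMeasure (n : ℕ) (hδ : 0 < δ) : OuterMeasure (Fin n → ℝ) :=
  OuterMeasure.ofFunction (singleCubeContent n δ) (singleCubeContent_empty hδ)

lemma hContent_le_tsum_singleCubeContent {s : ℕ → Set (Fin n → ℝ)} (h : E ⊆ ⋃ i, s i) :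
    hContent n δ E ≤ ∑' i, singleCubeContent n δ (s i) := by
  refine ENNReal.le_of_forall_pos_le_add fun ε hε hfin ↦ ?_
  obtain ⟨e, he0, he⟩ := ENNReal.exists_pos_sum_of_countable (ENNReal.coe_pos.2 hε).ne' ℕ
  have hQ : ∀ i, ∃ Q : Cube n, s i ⊆ Q.toSet ∧ Q.size δ < singleCubeContent n δ (s i) + e i := by
    intro i
    have hi := ENNReal.lt_add_right (ne_top_of_le_ne_top hfin.ne (ENNReal.le_tsum i))
      (ENNReal.coe_pos.2 (he0 i)).ne'
    simpa only [singleCubeContent, iInf_lt_iff, exists_prop] using hi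
  choose Q hsQ hQe using hQ
  calc hContent n δ E
      ≤ ∑' i, (Q i).size δ := iInf₂_le Q (h.trans (iUnion_mono hsQ))
    _ ≤ ∑' i, (singleCubeContent n δ (s i) + e i) := ENNReal.tsum_le_tsum fun i ↦ (hQe i).le
    _ = ∑' i, singleCubeContent n δ (s i) + ∑' i, (e i : ℝ≥0∞) := ENNReal.tsum_add
    _ ≤ ∑' i, singleCubeContent n δ (s i) + ε := by gcongr

lemma contentOuterMeasure_apply (hδ : 0 < δ) (E : Set (Fin n → ℝ)) :
    contentOuterMeasure n hδ E = hContent n δ E := by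
  rw [contentOuterMeasure, OuterMeasure.ofFunction_apply]
  refine le_antisymm (le_iInf₂ fun Q hQ ↦ ?_)
    (le_iInf₂ fun s hs ↦ hContent_le_tsum_singleCubeContent hs)
  exact (iInf₂_le (fun i ↦ (Q i).toSet) hQ).trans
    (ENNReal.tsum_le_tsum fun i ↦ iInf₂_le (Q i) Subset.rfl)

lemma hContent_mono (h : E ⊆ F) : hContent n δ E ≤ hContent n δ F :=
  le_iInf₂ fun Q hQ ↦ iInf₂_le Q (h.trans hQ)

lemma hContent_empty (hδ : 0 < δ) : hContent n δ ∅ = 0 := by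
  simp only [← contentOuterMeasure_apply hδ, measure_empty]

lemma hContent_union_le (hδ : 0 < δ) (E F : Set (Fin n → ℝ)) :
    hContent n δ (E ∪ F) ≤ hContent n δ E + hContent n δ F := by
  simpa only [← contentOuterMeasure_apply hδ] using measure_union_le E F

lemma hContent_iUnion_le (hδ : 0 < δ) {ι : Type*} [Countable ι] (s : ι → Set (Fin n → ℝ)) :
    hContent n δ (⋃ i, s i) ≤ ∑' i, hContent n δ (s i) := by
  simpa only [← contentOuterMeasure_apply hδ] using measure_iUnion_le s

lemma hContent_biUnion_le (hδ : 0 < δ) {ι : Type*} {I : Set ι} (hI : I.Countable)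
    (s : ι → Set (Fin n → ℝ)) : hContent n δ (⋃ i ∈ I, s i) ≤ ∑' i : I, hContent n δ (s i) := by
  simpa only [← contentOuterMeasure_apply hδ] using measure_biUnion_le _ hI s

lemma hContent_iUnion_eq_zero (hδ : 0 < δ) {ι : Type*} [Countable ι] {s : ι → Set (Fin n → ℝ)}
    (h : ∀ i, hContent n δ (s i) = 0) : hContent n δ (⋃ i, s i) = 0 := by
  simp only [← contentOuterMeasure_apply hδ] at h ⊢
  exact measure_iUnion_null h

lemma exists_cubes_of_hContent_lt {t : ℝ≥0∞} (h : hContent n δ E < t) :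
    ∃ Q : ℕ → Cube n, E ⊆ ⋃ i, (Q i).toSet ∧ ∑' i, (Q i).size δ < t := by
  simpa only [hContent, Cube.size, iInf_lt_iff, exists_prop] using h

lemma hContent_cube_le (hδ : 0 < δ) (Q : Cube n) : hContent n δ Q.toSet ≤ Q.size δ := by
  rw [← contentOuterMeasure_apply hδ]
  exact (OuterMeasure.ofFunction_le _).trans (iInf₂_le Q Subset.rfl)

-- If every covering cube is smaller than `Q`, comparing volumes suffices because `δ ≤ n`.
lemma Cube.size_le_tsum_of_subset (hδ : 0 ≤ δ) (hδn : δ ≤ n) {Q : Cube n} {P : ℕ → Cube n}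
    (h : Q.toSet ⊆ ⋃ i, (P i).toSet) : Q.size δ ≤ ∑' i, (P i).size δ := by
  by_cases! hbig : ∃ i, Q.side ≤ (P i).side
  · obtain ⟨i, hi⟩ := hbig
    exact (size_mono hδ hi).trans (ENNReal.le_tsum i)
  have hvol0 : volume Q.toSet ≠ 0 := by
    rw [volume_toSet]
    exact pow_ne_zero _ (ENNReal.ofReal_pos.2 Q.side_pos).ne'
  have hvol : volume Q.toSet ≠ ⊤ := by
    rw [volume_toSet]
    exact ENNReal.pow_ne_top ENNReal.ofReal_ne_top
  rw [← ENNReal.mul_le_mul_iff_right hvol0 hvol]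
  calc volume Q.toSet * Q.size δ
      ≤ (∑' i, volume (P i).toSet) * Q.size δ := by
        gcongr
        exact (measure_mono h).trans (measure_iUnion_le _)
    _ = ∑' i, volume (P i).toSet * Q.size δ := ENNReal.tsum_mul_right.symm
    _ ≤ ∑' i, volume Q.toSet * (P i).size δ :=
        ENNReal.tsum_le_tsum fun i ↦ volume_mul_size_le hδn (hbig i).le
    _ = volume Q.toSet * ∑' i, (P i).size δ := ENNReal.tsum_mul_left

lemma hContent_cube (hδ : 0 < δ) (hδn : δ ≤ n) (Q : Cube n) : hContent n δ Q.toSet = Q.size δ :=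
  le_antisymm (hContent_cube_le hδ Q) (le_iInf₂ fun _ h ↦ Cube.size_le_tsum_of_subset hδ.le hδn h)

lemma exists_isOpen_superset_hContent_lt {t : ℝ≥0∞} (h : hContent n δ E < t) :
    ∃ U, E ⊆ U ∧ IsOpen U ∧ hContent n δ U < t := by
  obtain ⟨Q, hEQ, hQt⟩ := exists_cubes_of_hContent_lt h
  have hlim : Filter.Tendsto (fun l : ℝ ↦ ENNReal.ofReal (l ^ δ) * ∑' i, (Q i).size δ)
      (nhds 1) (nhds (ENNReal.ofReal (1 ^ δ) * ∑' i, (Q i).size δ)) :=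
    ENNReal.Tendsto.mul_const (ENNReal.tendsto_ofReal (Real.continuousAt_rpow_const 1 δ (by simp)))
      (Or.inl (by simp))
  rw [Real.one_rpow, ENNReal.ofReal_one, one_mul] at hlim
  obtain ⟨l, hlt, hl : 1 < l⟩ :=
    (((hlim.eventually_lt_const hQt).filter_mono nhdsWithin_le_nhds).and
      (self_mem_nhdsWithin (s := Ioi (1 : ℝ)))).exists
  refine ⟨⋃ i, interior ((Q i).dilate l (zero_lt_one.trans hl)).toSet,
    hEQ.trans (iUnion_mono fun i ↦ (Q i).subset_interior_dilate hl),
    isOpen_iUnion fun _ ↦ isOpen_interior, lt_of_le_of_lt ?_ hlt⟩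
  calc hContent n δ (⋃ i, interior ((Q i).dilate l (zero_lt_one.trans hl)).toSet)
      ≤ ∑' i, ((Q i).dilate l (zero_lt_one.trans hl)).size δ :=
        iInf₂_le (fun i ↦ (Q i).dilate l (zero_lt_one.trans hl))
          (iUnion_mono fun i ↦ interior_subset)
    _ = ENNReal.ofReal (l ^ δ) * ∑' i, (Q i).size δ := by
        simp only [Cube.size_dilate, ENNReal.tsum_mul_left]

end Content

section DyadicGrid

variable {n : ℕ} {δ : ℝ}

/-- The address of a dyadic cube: its generation, and its integer position within it. -/
@[ext]
structure DyadicIndex (n : ℕ) where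
  level : ℤ
  pos : Fin n → ℤ

namespace DyadicIndex

instance : Countable (DyadicIndex n) :=
  Function.Injective.countable (f := fun p : DyadicIndex n ↦ (p.level, p.pos))
    fun _ _ h ↦ DyadicIndex.ext (congrArg Prod.fst h) (congrArg Prod.snd h)

/-- The address of the dyadic cube `m` generations above `p`. -/
def ancestor (p : DyadicIndex n) (m : ℕ) : DyadicIndex n :=
  ⟨p.level + m, fun i ↦ p.pos i / 2 ^ m⟩

lemma ancestor_zero (p : DyadicIndex n) : p.ancestor 0 = p := by
  simp [ancestor]

lemma ancestor_ancestor (p : DyadicIndex n) (m k : ℕ) :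
    (p.ancestor m).ancestor k = p.ancestor (m + k) := by
  ext i
  · simp [ancestor, add_assoc]
  · simp [ancestor, pow_add, Int.ediv_ediv_of_nonneg]

instance : PartialOrder (DyadicIndex n) where
  le p q := ∃ m, p.ancestor m = q
  le_refl p := ⟨0, p.ancestor_zero⟩
  le_trans := by
    rintro p _ _ ⟨m, rfl⟩ ⟨k, rfl⟩
    exact ⟨m + k, (p.ancestor_ancestor m k).symm⟩
  le_antisymm := by
    rintro p _ ⟨m, rfl⟩ ⟨k, hk⟩
    rw [ancestor_ancestor] at hk
    have hlevel : p.level + (m + k : ℕ) = p.level := congrArg level hk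
    obtain rfl : m = 0 := by omega
    exact p.ancestor_zero.symm

lemma level_mono {p q : DyadicIndex n} (h : p ≤ q) : p.level ≤ q.level := by
  obtain ⟨m, rfl⟩ := h
  simp [ancestor]

lemma lt_parent (p : DyadicIndex n) : p < p.ancestor 1 := by
  refine lt_of_le_of_ne ⟨1, rfl⟩ fun h ↦ ?_
  have hlevel := congrArg level h
  simp [ancestor] at hlevel

lemma le_total_of_le {s p q : DyadicIndex n} (hp : s ≤ p) (hq : s ≤ q) : p ≤ q ∨ q ≤ p := by
  obtain ⟨m, rfl⟩ := hp
  obtain ⟨k, rfl⟩ := hq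
  rcases le_total m k with h | h
  · exact .inl ⟨k - m, by rw [ancestor_ancestor, Nat.add_sub_cancel' h]⟩
  · exact .inr ⟨m - k, by rw [ancestor_ancestor, Nat.add_sub_cancel' h]⟩

lemma finite_Ici_inter_level_le (p : DyadicIndex n) (K : ℤ) : {q | p ≤ q ∧ q.level ≤ K}.Finite := by
  refine ((finite_Iic (K - p.level).toNat).image p.ancestor).subset ?_
  rintro _ ⟨⟨m, rfl⟩, hm : p.level + m ≤ K⟩
  exact ⟨m, show m ≤ (K - p.level).toNat by omega, rfl⟩

lemma exists_le_maximal {P : DyadicIndex n → Prop} {K : ℤ} (hK : ∀ q, P q → q.level ≤ K)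
    {p : DyadicIndex n} (hp : P p) : ∃ q, p ≤ q ∧ Maximal P q := by
  have hfin : {q | p ≤ q ∧ P q}.Finite :=
    (p.finite_Ici_inter_level_le K).subset fun q hq ↦ ⟨hq.1, hK q hq.2⟩
  obtain ⟨q, hpq, hq⟩ := hfin.exists_le_maximal ⟨le_rfl, hp⟩
  exact ⟨q, hpq, hq.prop.2, fun r hr hqr ↦ hq.le_of_ge ⟨hpq.trans hqr, hr⟩ hqr⟩

/-- The maximal addresses with the property `P` that lie strictly below no member of `S`: the
stopping cubes of a Calderón–Zygmund selection relative to the dyadic covering `S`. -/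
def stopping (P : DyadicIndex n → Prop) (S : Set (DyadicIndex n)) : Set (DyadicIndex n) :=
  {p | Maximal P p ∧ ∀ s ∈ S, ¬ p < s}

lemma exists_le_stopping_or {P : DyadicIndex n → Prop} {K : ℤ} (hK : ∀ q, P q → q.level ≤ K)
    (S : Set (DyadicIndex n)) {p : DyadicIndex n} (hp : P p) :
    (∃ q ∈ stopping P S, p ≤ q) ∨ ∃ s ∈ S, ¬ P s ∧ p ≤ s := by
  obtain ⟨q, hpq, hq⟩ := exists_le_maximal hK hp
  by_cases! hS : ∃ s ∈ S, q < s
  · obtain ⟨s, hs, hqs⟩ := hS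
    exact .inr ⟨s, hs, hq.not_prop_of_gt hqs, hpq.trans hqs.le⟩
  · exact .inl ⟨q, ⟨hq, hS⟩, hpq⟩

lemma pairwiseDisjoint_stopping (P : DyadicIndex n → Prop) (S : Set (DyadicIndex n)) :
    (univ : Set (stopping P S)).PairwiseDisjoint fun p ↦ {s | s ∈ S ∧ s ≤ p} := by
  refine fun p _ q _ hpq ↦ disjoint_left.2 fun s hsp hsq ↦ hpq (Subtype.ext ?_)
  rcases le_total_of_le hsp.2 hsq.2 with h | h
  · exact p.2.1.eq_of_le q.2.1.prop h
  · exact (q.2.1.eq_of_le p.2.1.prop h).symm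

end DyadicIndex

namespace Cube

/-- The dyadic cube with address `p` in the grid generated by the base cube `B`. -/
def grid (B : Cube n) (p : DyadicIndex n) : Cube n :=
  ⟨fun i ↦ B.corner i + B.side * 2 ^ p.level * p.pos i, B.side * 2 ^ p.level,
    mul_pos B.side_pos (by positivity)⟩

/-- The address of the dyadic cube of generation `k` containing `x`, in the grid generated
by `B`. -/
def gridIndex (B : Cube n) (k : ℤ) (x : Fin n → ℝ) : DyadicIndex n :=
  ⟨k, fun i ↦ ⌊(x i - B.corner i) / (B.side * 2 ^ k)⌋⟩

variable {B : Cube n} {p q : DyadicIndex n} {x : Fin n → ℝ}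

lemma mem_grid : x ∈ (B.grid p).toSet ↔ B.gridIndex p.level x = p := by
  have hs : 0 < B.side * 2 ^ p.level := (B.grid p).side_pos
  simp only [toSet, grid, mem_ofPred_eq, gridIndex, DyadicIndex.ext_iff, true_and, funext_iff]
  refine forall_congr' fun i ↦ ?_
  rw [Int.floor_eq_iff, le_div_iff₀ hs, div_lt_iff₀ hs]
  constructor <;> rintro ⟨h1, h2⟩ <;> constructor <;> linarith

lemma mem_grid_gridIndex (B : Cube n) (k : ℤ) (x : Fin n → ℝ) :
    x ∈ (B.grid (B.gridIndex k x)).toSet :=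
  mem_grid.2 rfl

lemma gridIndex_add (B : Cube n) (k : ℤ) (m : ℕ) (x : Fin n → ℝ) :
    B.gridIndex (k + m) x = (B.gridIndex k x).ancestor m := by
  refine DyadicIndex.ext rfl (funext fun i ↦ ?_)
  have h := Int.floor_div_natCast ((x i - B.corner i) / (B.side * 2 ^ k)) (2 ^ m)
  push_cast at h
  simp only [gridIndex, DyadicIndex.ancestor, ← h, zpow_add₀ (two_ne_zero' ℝ), zpow_natCast,
    div_div, mul_assoc]

lemma le_of_mem_grid (hp : x ∈ (B.grid p).toSet) (hq : x ∈ (B.grid q).toSet)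
    (h : p.level ≤ q.level) : p ≤ q := by
  refine ⟨(q.level - p.level).toNat, ?_⟩
  calc p.ancestor (q.level - p.level).toNat
      = B.gridIndex (p.level + (q.level - p.level).toNat) x := by rw [gridIndex_add, mem_grid.1 hp]
    _ = q := by rw [Int.toNat_of_nonneg (sub_nonneg.2 h), add_sub_cancel, mem_grid.1 hq]

lemma le_total_of_mem_grid (hp : x ∈ (B.grid p).toSet) (hq : x ∈ (B.grid q).toSet) :
    p ≤ q ∨ q ≤ p :=
  (le_total p.level q.level).imp (le_of_mem_grid hp hq) (le_of_mem_grid hq hp)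

lemma grid_subset_grid (h : p ≤ q) : (B.grid p).toSet ⊆ (B.grid q).toSet := by
  obtain ⟨m, rfl⟩ := h
  refine fun x hx ↦ mem_grid.2 ?_
  rw [DyadicIndex.ancestor, gridIndex_add, mem_grid.1 hx, DyadicIndex.ancestor]

lemma side_grid (B : Cube n) (p : DyadicIndex n) : (B.grid p).side = B.side * 2 ^ p.level := rfl

lemma side_grid_mono (h : p.level ≤ q.level) : (B.grid p).side ≤ (B.grid q).side :=
  mul_le_mul_of_nonneg_left (zpow_le_zpow_right₀ one_le_two h) B.side_pos.le

lemma grid_gridIndex_zero_corner (B : Cube n) : B.grid (B.gridIndex 0 B.corner) = B := by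
  cases B
  simp [grid, gridIndex]

lemma exists_level_comparable (B Q : Cube n) :
    ∃ k : ℤ, Q.side ≤ B.side * 2 ^ k ∧ B.side * 2 ^ k ≤ 2 * Q.side := by
  have hB := B.side_pos
  obtain ⟨k, h1, h2⟩ := exists_mem_Ioc_zpow (div_pos Q.side_pos hB) (one_lt_two (α := ℝ))
  refine ⟨k + 1, by rwa [div_le_iff₀' hB] at h2, ?_⟩
  rw [lt_div_iff₀' hB] at h1
  rw [zpow_add_one₀ two_ne_zero]
  linarith

lemma encard_gridIndex_image_le {B Q : Cube n} {k : ℤ} (h : Q.side ≤ B.side * 2 ^ k) :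
    (B.gridIndex k '' Q.toSet).encard ≤ 2 ^ n := by
  set a : Fin n → ℤ := (B.gridIndex k Q.corner).pos
  have hs : 0 < B.side * 2 ^ k := Q.side_pos.trans_le h
  have hsub : B.gridIndex k '' Q.toSet ⊆ DyadicIndex.mk k '' ↑(Finset.Icc a (a + 1)) := by
    rintro _ ⟨x, hx, rfl⟩
    refine ⟨(B.gridIndex k x).pos, Finset.mem_coe.2 (Finset.mem_Icc.2 ⟨?_, ?_⟩), rfl⟩
    · intro i
      have := (hx i).1
      exact Int.floor_mono (by gcongr)
    · intro i
      refine (Int.floor_mono ?_).trans_eq (Int.floor_add_one _)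
      rw [← sub_le_iff_le_add', ← sub_div, div_le_one hs]
      linarith [(hx i).2]
  calc (B.gridIndex k '' Q.toSet).encard
      ≤ (↑(Finset.Icc a (a + 1)) : Set (Fin n → ℤ)).encard :=
        (encard_le_encard hsub).trans (encard_image_le _ _)
    _ = 2 ^ n := by
      rw [encard_coe_eq_coe_finsetCard, Pi.card_Icc]
      simp [show ∀ z : ℤ, z + 1 + 1 - z = 2 by intro z; ring]

end Cube

/-- The factor lost when a cube is covered by dyadic cubes of comparable size. -/
def dyadicConst (n : ℕ) (δ : ℝ) : ℝ≥0∞ := 2 ^ n * ENNReal.ofReal (2 ^ δ)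

lemma dyadicConst_ne_zero : dyadicConst n δ ≠ 0 :=
  mul_ne_zero (by simp) (ENNReal.ofReal_pos.2 (by positivity)).ne'

lemma dyadicConst_ne_top : dyadicConst n δ ≠ ⊤ :=
  ENNReal.mul_ne_top (by simp) ENNReal.ofReal_ne_top

lemma exists_dyadic_cover_cube (hδ : 0 ≤ δ) (B Q : Cube n) :
    ∃ S : Set (DyadicIndex n), Q.toSet ⊆ ⋃ p ∈ S, (B.grid p).toSet ∧
      (∀ p ∈ S, ((B.grid p).toSet ∩ Q.toSet).Nonempty ∧ Q.side ≤ (B.grid p).side) ∧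
      ∑' p : S, (B.grid p).size δ ≤ dyadicConst n δ * Q.size δ := by
  obtain ⟨k, hk, hk2⟩ := B.exists_level_comparable Q
  refine ⟨B.gridIndex k '' Q.toSet, ?_, ?_, ?_⟩
  · exact fun x hx ↦ mem_biUnion (mem_image_of_mem _ hx) (B.mem_grid_gridIndex k x)
  · rintro _ ⟨x, hx, rfl⟩
    exact ⟨⟨x, B.mem_grid_gridIndex k x, hx⟩, hk⟩
  · calc ∑' p : B.gridIndex k '' Q.toSet, (B.grid p).size δ
        ≤ ∑' _ : B.gridIndex k '' Q.toSet, ENNReal.ofReal (2 ^ δ) * Q.size δ := by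
          refine ENNReal.tsum_le_tsum ?_
          rintro ⟨_, x, _, rfl⟩
          exact Cube.size_le_mul hδ two_pos.le hk2
      _ = (B.gridIndex k '' Q.toSet).encard * (ENNReal.ofReal (2 ^ δ) * Q.size δ) :=
          ENNReal.tsum_set_const _ _
      _ ≤ 2 ^ n * (ENNReal.ofReal (2 ^ δ) * Q.size δ) := by
          gcongr
          exact_mod_cast Cube.encard_gridIndex_image_le hk
      _ = dyadicConst n δ * Q.size δ := by rw [dyadicConst, mul_assoc]

lemma exists_dyadic_cover (hδ : 0 ≤ δ) (B : Cube n) {E : Set (Fin n → ℝ)} {t : ℝ≥0∞}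
    (h : hContent n δ E < t) :
    ∃ S : Set (DyadicIndex n), E ⊆ ⋃ p ∈ S, (B.grid p).toSet ∧
      ∑' p : S, (B.grid p).size δ ≤ dyadicConst n δ * t := by
  obtain ⟨Q, hEQ, hQt⟩ := exists_cubes_of_hContent_lt h
  choose S hQS _ hS using fun i ↦ exists_dyadic_cover_cube hδ B (Q i)
  refine ⟨⋃ i, S i, ?_, ?_⟩
  · rw [biUnion_iUnion]
    exact hEQ.trans (iUnion_mono hQS)
  · calc ∑' p : ⋃ i, S i, (B.grid p).size δ
        ≤ ∑' i, ∑' p : S i, (B.grid p).size δ :=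
          ENNReal.tsum_iUnion_le_tsum (fun p ↦ (B.grid p).size δ) S
      _ ≤ ∑' i, dyadicConst n δ * (Q i).size δ := ENNReal.tsum_le_tsum hS
      _ = dyadicConst n δ * ∑' i, (Q i).size δ := ENNReal.tsum_mul_left
      _ ≤ dyadicConst n δ * t := by gcongr

lemma mul_tsum_stopping_le (hδ : 0 < δ) {B : Cube n} {E : Set (Fin n → ℝ)}
    {P : DyadicIndex n → Prop} {S : Set (DyadicIndex n)} {κ : ℝ≥0∞}
    (hE : E ⊆ ⋃ s ∈ S, (B.grid s).toSet)
    (hκ : ∀ p ∈ DyadicIndex.stopping P S,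
      κ * (B.grid p).size δ ≤ hContent n δ ((B.grid p).toSet ∩ E)) :
    κ * ∑' p : DyadicIndex.stopping P S, (B.grid p).size δ ≤ ∑' s : S, (B.grid s).size δ := by
  set T : DyadicIndex n → Set (DyadicIndex n) := fun p ↦ {s | s ∈ S ∧ s ≤ p}
  have hcover : ∀ p ∈ DyadicIndex.stopping P S,
      (B.grid p).toSet ∩ E ⊆ ⋃ s ∈ T p, (B.grid s).toSet := by
    rintro p hp x ⟨hxp, hxE⟩
    obtain ⟨s, hs, hxs⟩ := mem_iUnion₂.1 (hE hxE)
    exact mem_biUnion ⟨hs, (Cube.le_total_of_mem_grid hxs hxp).elim id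
      fun h ↦ (h.eq_or_lt.resolve_right (hp.2 s hs)).ge⟩ hxs
  calc κ * ∑' p : DyadicIndex.stopping P S, (B.grid p).size δ
      = ∑' p : DyadicIndex.stopping P S, κ * (B.grid p).size δ := ENNReal.tsum_mul_left.symm
    _ ≤ ∑' p : DyadicIndex.stopping P S, ∑' s : T p, (B.grid s).size δ := by
        refine ENNReal.tsum_le_tsum fun p ↦ (hκ p p.2).trans ?_
        refine (hContent_mono (hcover p p.2)).trans ?_
        exact (hContent_biUnion_le hδ (T p).to_countable _).trans
          (ENNReal.tsum_le_tsum fun s ↦ hContent_cube_le hδ _)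
    _ = ∑' s : ⋃ p : DyadicIndex.stopping P S, T p, (B.grid s).size δ :=
        (ENNReal.tsum_biUnion (f := fun s ↦ (B.grid s).size δ)
          (DyadicIndex.pairwiseDisjoint_stopping P S)).symm
    _ ≤ ∑' s : S, (B.grid s).size δ :=
        ENNReal.tsum_mono_subtype (fun s ↦ (B.grid s).size δ)
          (iUnion_subset fun p s hs ↦ hs.1)

end DyadicGrid

section Density

variable {n : ℕ} {δ : ℝ}

/-- The points lying in some cube in which `O` has relative content larger than `θ`: a superlevel
set of the maximal function of `O`. -/
def highDensitySet (n : ℕ) (δ : ℝ) (θ : ℝ≥0∞) (O : Set (Fin n → ℝ)) : Set (Fin n → ℝ) :=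
  {x | ∃ Q : Cube n, x ∈ Q.toSet ∧ θ * Q.size δ < hContent n δ (Q.toSet ∩ O)}

lemma exists_level_bound_of_size_lt (hδ : 0 < δ) (B : Cube n) {v : ℝ≥0∞} (hv : v ≠ ⊤) :
    ∃ K : ℤ, ∀ q : DyadicIndex n, (B.grid q).size δ < v → q.level ≤ K := by
  obtain ⟨m, hm⟩ := pow_unbounded_of_one_lt (v.toReal ^ (1 / δ) / B.side) (one_lt_two (α := ℝ))
  refine ⟨m, fun q hq ↦ ?_⟩
  contrapose! hq
  have hside : v.toReal ^ (1 / δ) ≤ (B.grid q).side := by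
    rw [div_lt_iff₀' B.side_pos] at hm
    refine hm.le.trans (mul_le_mul_of_nonneg_left ?_ B.side_pos.le)
    rw [← zpow_natCast]
    exact zpow_le_zpow_right₀ one_le_two hq.le
  calc v = ENNReal.ofReal ((v.toReal ^ (1 / δ)) ^ δ) := by
        rw [← Real.rpow_mul ENNReal.toReal_nonneg, one_div_mul_cancel hδ.ne', Real.rpow_one,
          ENNReal.ofReal_toReal hv]
    _ ≤ (B.grid q).size δ := by
        rw [Cube.size]
        gcongr

lemma exists_dense_grid_cube (hδ : 0 < δ) (B : Cube n) {Q : Cube n} {θ : ℝ≥0∞}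
    {O : Set (Fin n → ℝ)} (h : θ * Q.size δ < hContent n δ (Q.toSet ∩ O)) :
    ∃ p : DyadicIndex n, ((B.grid p).toSet ∩ Q.toSet).Nonempty ∧ Q.side ≤ (B.grid p).side ∧
      θ / dyadicConst n δ * (B.grid p).size δ < hContent n δ ((B.grid p).toSet ∩ O) := by
  obtain ⟨S, hQS, hS, hsize⟩ := exists_dyadic_cover_cube hδ.le B Q
  by_contra! hc
  refine h.not_ge ?_
  calc hContent n δ (Q.toSet ∩ O)
      ≤ hContent n δ (⋃ p ∈ S, (B.grid p).toSet ∩ O) :=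
        hContent_mono (iUnion₂_inter _ O ▸ inter_subset_inter_left O hQS)
    _ ≤ ∑' p : S, hContent n δ ((B.grid p).toSet ∩ O) :=
        hContent_biUnion_le hδ S.to_countable _
    _ ≤ ∑' p : S, θ / dyadicConst n δ * (B.grid p).size δ :=
        ENNReal.tsum_le_tsum fun p ↦ hc p (hS p p.2).1 (hS p p.2).2
    _ = θ / dyadicConst n δ * ∑' p : S, (B.grid p).size δ := ENNReal.tsum_mul_left
    _ ≤ θ / dyadicConst n δ * (dyadicConst n δ * Q.size δ) := by gcongr
    _ = θ * Q.size δ := by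
        rw [← mul_assoc, ENNReal.div_mul_cancel dyadicConst_ne_zero dyadicConst_ne_top]

lemma highDensitySet_subset (hδ : 0 < δ) (B : Cube n) {θ : ℝ≥0∞} {O : Set (Fin n → ℝ)}
    {P : DyadicIndex n → Prop} {K : ℤ}
    (hP : ∀ p, P p ↔ θ / dyadicConst n δ * (B.grid p).size δ < hContent n δ ((B.grid p).toSet ∩ O))
    (hK : ∀ p, P p → p.level ≤ K) (S : Set (DyadicIndex n)) :
    highDensitySet n δ θ O ⊆
      ⋃ p ∈ S ∪ DyadicIndex.stopping P S, ((B.grid p).dilate 3 three_pos).toSet := by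
  rintro x ⟨Q, hxQ, hlt⟩
  obtain ⟨p, hpQ, hside, hp⟩ := exists_dense_grid_cube hδ B hlt
  have hx : ∀ q, p ≤ q → x ∈ ((B.grid q).dilate 3 three_pos).toSet := fun q hpq ↦
    Cube.subset_dilate_three (hpQ.mono (inter_subset_inter_left _ (Cube.grid_subset_grid hpq)))
      (hside.trans (Cube.side_grid_mono (DyadicIndex.level_mono hpq))) hxQ
  rcases DyadicIndex.exists_le_stopping_or hK S ((hP p).2 hp) with ⟨q, hq, hpq⟩ | ⟨s, hs, -, hps⟩
  · exact mem_biUnion (.inr hq) (hx q hpq)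
  · exact mem_biUnion (.inl hs) (hx s hps)

lemma hContent_highDensitySet_le_of_lt (hδ : 0 < δ) {θ : ℝ≥0∞} (hθ0 : θ ≠ 0) (hθ : θ ≠ ⊤)
    {O : Set (Fin n → ℝ)} {t : ℝ≥0∞} (hO : hContent n δ O < t) :
    hContent n δ (highDensitySet n δ θ O) ≤ ENNReal.ofReal (3 ^ δ) *
      (dyadicConst n δ + (θ / dyadicConst n δ)⁻¹ * dyadicConst n δ) * t := by
  set B : Cube n := ⟨0, 1, one_pos⟩
  set θ' := θ / dyadicConst n δ
  have hθ'0 : θ' ≠ 0 := (ENNReal.div_pos hθ0 dyadicConst_ne_top).ne'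
  have hθ' : θ' ≠ ⊤ := ENNReal.div_ne_top hθ dyadicConst_ne_zero
  set P : DyadicIndex n → Prop :=
    fun p ↦ θ' * (B.grid p).size δ < hContent n δ ((B.grid p).toSet ∩ O)
  obtain ⟨K, hK⟩ := exists_level_bound_of_size_lt hδ B (ENNReal.div_ne_top hO.ne_top hθ'0)
  have hPK : ∀ p, P p → p.level ≤ K := fun p hp ↦ hK p <|
    (ENNReal.lt_div_iff_mul_lt (.inl hθ'0) (.inl hθ')).2 <|
      (mul_comm _ _).trans_lt (hp.trans_le (hContent_mono inter_subset_right))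
  obtain ⟨S, hOS, hS⟩ := exists_dyadic_cover hδ.le B hO
  have hT : ∑' p : DyadicIndex.stopping P S, (B.grid p).size δ ≤ θ'⁻¹ * (dyadicConst n δ * t) := by
    rw [← ENNReal.mul_le_iff_le_inv hθ'0 hθ']
    exact (mul_tsum_stopping_le hδ hOS fun p hp ↦ hp.1.prop.le).trans hS
  calc hContent n δ (highDensitySet n δ θ O)
      ≤ ∑' p : ↑(S ∪ DyadicIndex.stopping P S),
          hContent n δ ((B.grid p).dilate 3 three_pos).toSet :=
        (hContent_mono (highDensitySet_subset hδ B (fun _ ↦ Iff.rfl) hPK S)).trans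
          (hContent_biUnion_le hδ (to_countable _) _)
    _ ≤ ∑' p : ↑(S ∪ DyadicIndex.stopping P S), ENNReal.ofReal (3 ^ δ) * (B.grid p).size δ :=
        ENNReal.tsum_le_tsum fun p ↦
          (hContent_cube_le hδ _).trans_eq (Cube.size_dilate _ three_pos)
    _ ≤ ENNReal.ofReal (3 ^ δ) * (∑' p : S, (B.grid p).size δ +
          ∑' p : DyadicIndex.stopping P S, (B.grid p).size δ) := by
        rw [ENNReal.tsum_mul_left]
        gcongr
        exact ENNReal.tsum_union_le (fun p ↦ (B.grid p).size δ) _ _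
    _ ≤ ENNReal.ofReal (3 ^ δ) * (dyadicConst n δ * t + θ'⁻¹ * (dyadicConst n δ * t)) := by gcongr
    _ = _ := by ring

theorem exists_hContent_highDensitySet_le (hδ : 0 < δ) {θ : ℝ≥0∞} (hθ0 : θ ≠ 0) (hθ : θ ≠ ⊤) :
    ∃ D : ℝ≥0∞, D ≠ ⊤ ∧ ∀ O : Set (Fin n → ℝ),
      hContent n δ (highDensitySet n δ θ O) ≤ D * hContent n δ O := by
  have hC : dyadicConst n δ ≠ ⊤ := dyadicConst_ne_top
  have hθC : (θ / dyadicConst n δ)⁻¹ ≠ ⊤ := ENNReal.inv_ne_top.2 (ENNReal.div_pos hθ0 hC).ne'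
  set D := ENNReal.ofReal (3 ^ δ) *
    (dyadicConst n δ + (θ / dyadicConst n δ)⁻¹ * dyadicConst n δ)
  have hDtop : D ≠ ⊤ :=
    ENNReal.mul_ne_top ENNReal.ofReal_ne_top (ENNReal.add_ne_top.2 ⟨hC, ENNReal.mul_ne_top hθC hC⟩)
  have hD0 : D ≠ 0 :=
    mul_ne_zero (ENNReal.ofReal_pos.2 (by positivity)).ne' (by simp [dyadicConst_ne_zero])
  refine ⟨D, hDtop, fun O ↦ ?_⟩
  rw [← ENNReal.inv_mul_le_iff hD0 hDtop]
  refine le_of_forall_gt_imp_ge_of_dense fun t ht ↦ ?_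
  rw [ENNReal.inv_mul_le_iff hD0 hDtop]
  exact hContent_highDensitySet_le_of_lt hδ hθ0 hθ ht

/-- `u` is continuous off subsets of `U` that are arbitrarily thin in every cube meeting the
complement of `U`, uniformly over all scales. -/
def ThinlyDiscontinuous (n : ℕ) (δ : ℝ) (u : (Fin n → ℝ) → ℝ) (U : Set (Fin n → ℝ)) : Prop :=
  ∀ θ : ℝ≥0∞, θ ≠ 0 → ∃ O ⊆ U, ContinuousOn u Oᶜ ∧
    ∀ x ∉ U, ∀ Q : Cube n, x ∈ Q.toSet → hContent n δ (Q.toSet ∩ O) ≤ θ * Q.size δ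

/-- Approximate continuity at `x`: in small cubes around `x`, the values of `u` away from `u x` are
taken on a set of negligible relative content. -/
def ApproxContinuousAt (n : ℕ) (δ : ℝ) (u : (Fin n → ℝ) → ℝ) (x : Fin n → ℝ) : Prop :=
  ∀ η : ℝ, 0 < η → ∀ θ : ℝ≥0∞, θ ≠ 0 → ∃ r : ℝ, 0 < r ∧ ∀ Q : Cube n, x ∈ Q.toSet → Q.side < r →
    hContent n δ (Q.toSet ∩ {y | η ≤ |u y - u x|}) ≤ θ * Q.size δ

variable {u : (Fin n → ℝ) → ℝ} {U : Set (Fin n → ℝ)} {x : Fin n → ℝ}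

lemma QuasiCont.exists_small_union_highDensitySet (hu : QuasiCont n δ u) (hδ : 0 < δ)
    {θ e : ℝ≥0∞} (hθ0 : θ ≠ 0) (hθ : θ ≠ ⊤) (he : e ≠ 0) :
    ∃ O, ContinuousOn u Oᶜ ∧ hContent n δ (O ∪ highDensitySet n δ θ O) ≤ e := by
  obtain ⟨D, hD, hweak⟩ := exists_hContent_highDensitySet_le (n := n) hδ hθ0 hθ
  obtain ⟨t, ht, hte⟩ :=
    ENNReal.exists_nnreal_pos_mul_lt (ENNReal.add_ne_top.2 ⟨ENNReal.one_ne_top, hD⟩) he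
  obtain ⟨O, -, hOt, hcont⟩ := hu t ht
  rw [ENNReal.ofReal_coe_nnreal] at hOt
  refine ⟨O, hcont, ?_⟩
  calc hContent n δ (O ∪ highDensitySet n δ θ O)
      ≤ hContent n δ O + D * hContent n δ O :=
        (hContent_union_le hδ _ _).trans (by gcongr; exact hweak O)
    _ = hContent n δ O * (1 + D) := by ring
    _ ≤ t * (1 + D) := by gcongr
    _ ≤ e := hte.le

lemma QuasiCont.exists_thinlyDiscontinuous (hu : QuasiCont n δ u) (hδ : 0 < δ) {ε : ℝ≥0∞}
    (hε : ε ≠ 0) : ∃ U, IsOpen U ∧ hContent n δ U < ε ∧ ThinlyDiscontinuous n δ u U := by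
  obtain ⟨e, he0, he⟩ := ENNReal.exists_pos_sum_of_countable hε ℕ
  choose O hO hOe using fun k : ℕ ↦
    hu.exists_small_union_highDensitySet hδ (θ := 2⁻¹ ^ k) (by simp) (by simp)
      (ENNReal.coe_pos.2 (he0 k)).ne'
  obtain ⟨U, hsub, hU, hUε⟩ := exists_isOpen_superset_hContent_lt <|
    ((hContent_iUnion_le hδ fun k ↦ O k ∪ highDensitySet n δ (2⁻¹ ^ k) (O k)).trans
      (ENNReal.tsum_le_tsum hOe)).trans_lt he
  refine ⟨U, hU, hUε, fun θ hθ ↦ ?_⟩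
  obtain ⟨k, hk⟩ := ENNReal.exists_inv_two_pow_lt hθ
  have hkU := (subset_iUnion _ k).trans hsub
  refine ⟨O k, subset_union_left.trans hkU, hO k, fun x hx Q hxQ ↦ ?_⟩
  by_contra! hlt
  exact hx (hkU (.inr ⟨Q, hxQ, lt_of_le_of_lt (by gcongr) hlt⟩))

lemma ThinlyDiscontinuous.approxContinuousAt (h : ThinlyDiscontinuous n δ u U) (hx : x ∉ U) :
    ApproxContinuousAt n δ u x := by
  intro η hη θ hθ
  obtain ⟨O, hOU, hcont, hO⟩ := h θ hθ
  obtain ⟨r, hr, hnear⟩ := Metric.continuousOn_iff.1 hcont x (fun hxO ↦ hx (hOU hxO)) η hη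
  refine ⟨r, hr, fun Q hxQ hQr ↦ (hContent_mono ?_).trans (hO x hx Q hxQ)⟩
  rintro y ⟨hyQ, hy⟩
  refine ⟨hyQ, by_contra fun hyO ↦ ?_⟩
  have hyx := hnear y hyO ((Cube.dist_lt_side hyQ hxQ).trans hQr)
  exact (Real.dist_eq _ _ ▸ hyx).not_ge hy

theorem QuasiCont.ae_approxContinuousAt (hu : QuasiCont n δ u) (hδ : 0 < δ) :
    AEContent n δ (ApproxContinuousAt n δ u) := by
  refine le_antisymm (le_of_forall_gt_imp_ge_of_dense fun ε hε ↦ ?_) bot_le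
  obtain ⟨U, -, hUε, hU⟩ := hu.exists_thinlyDiscontinuous hδ hε.ne'
  exact (hContent_mono fun _ ↦ not_imp_comm.1 hU.approxContinuousAt).trans hUε.le

lemma Cube.exists_subcube_side_lt {Q : Cube n} (hx : x ∈ Q.toSet) {r : ℝ} (hr : 0 < r) :
    ∃ R : Cube n, x ∈ R.toSet ∧ R.toSet ⊆ Q.toSet ∧ R.side < r := by
  obtain ⟨m, hm⟩ := exists_pow_lt_of_lt_one (div_pos hr Q.side_pos) (one_half_lt_one (α := ℝ))
  refine ⟨Q.grid (Q.gridIndex (-m) x), Q.mem_grid_gridIndex _ x, ?_, ?_⟩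
  · have hQ := Q.grid_gridIndex_zero_corner
    conv_rhs => rw [← hQ]
    refine grid_subset_grid (le_of_mem_grid (Q.mem_grid_gridIndex _ x) (hQ.symm ▸ hx) ?_)
    simp [gridIndex]
  · rw [lt_div_iff₀' Q.side_pos] at hm
    simpa [side_grid, gridIndex] using hm

lemma ApproxContinuousAt.exists_subcube (hu : ApproxContinuousAt n δ u x) (hδ : 0 < δ) (hδn : δ ≤ n)
    {Q : Cube n} (hx : x ∈ Q.toSet) {η : ℝ} (hη : 0 < η) {c : ℝ≥0∞} (hc : c < 1) :
    ∃ R : Cube n, x ∈ R.toSet ∧ R.toSet ⊆ Q.toSet ∧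
      c * R.size δ ≤ hContent n δ (R.toSet ∩ {y | |u y - u x| < η}) := by
  obtain ⟨r, hr, hsmall⟩ := hu η hη (1 - c) (tsub_pos_of_lt hc).ne'
  obtain ⟨R, hxR, hRQ, hRr⟩ := Cube.exists_subcube_side_lt hx hr
  refine ⟨R, hxR, hRQ, ?_⟩
  have hsplit : R.size δ ≤ (1 - c) * R.size δ + hContent n δ (R.toSet ∩ {y | |u y - u x| < η}) :=
    calc R.size δ = hContent n δ R.toSet := (hContent_cube hδ hδn R).symm
      _ ≤ hContent n δ (R.toSet ∩ {y | η ≤ |u y - u x|} ∪ R.toSet ∩ {y | |u y - u x| < η}) :=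
          hContent_mono fun y hy ↦ (le_or_gt η |u y - u x|).imp (⟨hy, ·⟩) (⟨hy, ·⟩)
      _ ≤ _ := (hContent_union_le hδ _ _).trans (by gcongr; exact hsmall R hxR hRr)
  calc c * R.size δ = (1 - (1 - c)) * R.size δ := by
        rw [ENNReal.sub_sub_cancel ENNReal.one_ne_top hc.le]
    _ = R.size δ - (1 - c) * R.size δ := by
        rw [ENNReal.sub_mul fun _ _ ↦ R.size_ne_top, one_mul]
    _ ≤ _ := tsub_le_iff_left.2 hsplit

end Density

section JohnNirenberg

variable {n : ℕ} {δ : ℝ} {f u v : (Fin n → ℝ) → ℝ} {E F : Set (Fin n → ℝ)} {Q R : Cube n}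

lemma integH_mono (hEF : E ⊆ F) (huv : ∀ x ∈ E, u x ≤ v x) : integH n δ u E ≤ integH n δ v F :=
  lintegral_mono fun _ ↦ hContent_mono fun x hx ↦ ⟨hEF hx.1, hx.2.trans_le (huv x hx.1)⟩

lemma ofReal_mul_hContent_le_integH (u : (Fin n → ℝ) → ℝ) (E : Set (Fin n → ℝ)) (t : ℝ) :
    ENNReal.ofReal t * hContent n δ {x | x ∈ E ∧ t < u x} ≤ integH n δ u E :=
  calc ENNReal.ofReal t * hContent n δ {x | x ∈ E ∧ t < u x}
      = ∫⁻ _ in Ioc 0 t, hContent n δ {x | x ∈ E ∧ t < u x} := by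
        rw [lintegral_const, Measure.restrict_apply_univ, Real.volume_Ioc, sub_zero, mul_comm]
    _ ≤ ∫⁻ s in Ioc 0 t, hContent n δ {x | x ∈ E ∧ s < u x} :=
        setLIntegral_mono' measurableSet_Ioc fun s hs ↦
          hContent_mono fun _ hx ↦ ⟨hx.1, hs.2.trans_lt hx.2⟩
    _ ≤ integH n δ u E := lintegral_mono_set Ioc_subset_Ioi_self

lemma integH_sub_essInfQ_le (hδ : 0 < δ) (hδn : δ ≤ n) (f : (Fin n → ℝ) → ℝ) (Q : Cube n) :
    integH n δ (fun x ↦ |f x - essInfQ n δ f Q|) Q.toSet ≤ bloNorm n δ f * Q.size δ := by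
  rw [← ENNReal.div_le_iff Q.size_ne_zero Q.size_ne_top, ← hContent_cube hδ hδn]
  exact le_iSup (fun Q ↦ integH n δ (fun x ↦ |f x - essInfQ n δ f Q|) Q.toSet /
    hContent n δ Q.toSet) Q

lemma essInfQ_nonneg (f : (Fin n → ℝ) → ℝ) (Q : Cube n) : 0 ≤ essInfQ n δ f Q :=
  Real.sInf_nonneg fun _ ht ↦ ht.1.le

lemma essInfQ_le {t : ℝ} (ht : 0 < t) (h : hContent n δ {x | x ∈ Q.toSet ∧ f x < t} ≠ 0) :
    essInfQ n δ f Q ≤ t :=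
  csInf_le ⟨0, fun _ hs ↦ hs.1.le⟩ ⟨ht, pos_iff_ne_zero.2 h⟩

lemma essInfQ_max_zero (f : (Fin n → ℝ) → ℝ) (Q : Cube n) :
    essInfQ n δ (fun x ↦ max (f x) 0) Q = essInfQ n δ f Q := by
  refine congrArg sInf (Set.ext fun t ↦ and_congr_right fun ht ↦ ?_)
  simp only [max_lt_iff, ht, and_true]

lemma bloNorm_max_zero_le (f : (Fin n → ℝ) → ℝ) :
    bloNorm n δ (fun x ↦ max (f x) 0) ≤ bloNorm n δ f := by
  refine iSup_mono fun Q ↦ ENNReal.div_le_div_right (integH_mono Subset.rfl fun x _ ↦ ?_) _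
  rw [essInfQ_max_zero]
  conv_lhs => rw [← max_eq_left (essInfQ_nonneg (δ := δ) f Q)]
  exact abs_max_sub_max_le_abs _ _ _

lemma hContent_lt_essInfQ_eq_zero (hδ : 0 < δ) (hf : ∀ x, 0 ≤ f x) (Q : Cube n) :
    hContent n δ {x | x ∈ Q.toSet ∧ f x < essInfQ n δ f Q} = 0 := by
  have hnull : ∀ t : Iio (essInfQ n δ f Q), hContent n δ {x | x ∈ Q.toSet ∧ f x < t} = 0 := by
    rintro ⟨t, ht⟩
    by_contra h
    obtain ⟨x, -, hx⟩ : {x | x ∈ Q.toSet ∧ f x < t}.Nonempty :=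
      nonempty_iff_ne_empty.2 fun he ↦ h (he ▸ hContent_empty hδ)
    exact (essInfQ_le ((hf x).trans_lt hx) h).not_gt ht
  refine le_antisymm ((hContent_mono ?_).trans_eq (hContent_iUnion_eq_zero hδ
    fun q : {q : ℚ // (q : ℝ) < essInfQ n δ f Q} ↦ hnull ⟨q, q.2⟩)) bot_le
  rintro x ⟨hxQ, hx⟩
  obtain ⟨q, hxq, hq⟩ := exists_rat_btwn hx
  exact mem_iUnion.2 ⟨⟨q, hq⟩, hxQ, hxq⟩

lemma hContent_lt_ne_zero_of_essInfQ_lt (hδ : 0 < δ) (hδn : δ ≤ n) {t : ℝ}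
    (h : essInfQ n δ f Q < t) : hContent n δ {x | x ∈ Q.toSet ∧ f x < t} ≠ 0 := by
  have hne : {t : ℝ | 0 < t ∧ 0 < hContent n δ {x | x ∈ Q.toSet ∧ f x < t}}.Nonempty := by
    by_contra! hempty
    have hnull : ∀ m : ℕ, hContent n δ {x | x ∈ Q.toSet ∧ f x < m + 1} = 0 := fun m ↦
      of_not_not fun h0 ↦ hempty.subset ⟨m.cast_add_one_pos, pos_iff_ne_zero.2 h0⟩
    have hcover : Q.toSet ⊆ ⋃ m : ℕ, {x | x ∈ Q.toSet ∧ f x < m + 1} := fun x hx ↦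
      have ⟨m, hm⟩ := exists_nat_gt (f x)
      mem_iUnion.2 ⟨m, hx, hm.trans (lt_add_one _)⟩
    refine Q.size_ne_zero (δ := δ) (le_antisymm ?_ bot_le)
    rw [← hContent_cube hδ hδn]
    exact (hContent_mono hcover).trans_eq (hContent_iUnion_eq_zero hδ hnull)
  obtain ⟨s, hs, hst⟩ := exists_lt_of_csInf_lt hne h
  refine (hs.2.trans_le (hContent_mono ?_)).ne'
  exact fun x hx ↦ ⟨hx.1, hx.2.trans hst⟩

lemma essInfQ_anti (hδ : 0 < δ) (hδn : δ ≤ n) (hf : ∀ x, 0 ≤ f x) (h : Q.toSet ⊆ R.toSet) :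
    essInfQ n δ f R ≤ essInfQ n δ f Q := by
  by_contra! hlt
  refine hContent_lt_ne_zero_of_essInfQ_lt hδ hδn hlt (le_antisymm ?_ bot_le)
  rw [← hContent_lt_essInfQ_eq_zero hδ hf R]
  exact hContent_mono fun x hx ↦ ⟨h hx.1, hx.2⟩

/-- The dyadic cubes of the grid generated by `Q` that are selected in the Calderón–Zygmund
argument at height `a`: those meeting `Q` on which the essential infimum of `f` exceeds `a`. -/
def Cube.IsHigh (δ : ℝ) (f : (Fin n → ℝ) → ℝ) (a : ℝ) (Q : Cube n) (p : DyadicIndex n) : Prop :=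
  ((Q.grid p).toSet ∩ Q.toSet).Nonempty ∧ a < essInfQ n δ f (Q.grid p)

variable {a l : ℝ} {ρ : ℝ≥0∞} {p : DyadicIndex n} {S : Set (DyadicIndex n)}

lemma Cube.IsHigh.le_gridIndex (hp : Q.IsHigh δ f a p) (hδ : 0 < δ) (hδn : δ ≤ n)
    (hf : ∀ x, 0 ≤ f x) (ha : essInfQ n δ f Q ≤ a) : p ≤ Q.gridIndex 0 Q.corner := by
  have hQ := Q.grid_gridIndex_zero_corner
  obtain ⟨⟨x, hxp, hxQ⟩, hap⟩ := hp
  refine (le_total_of_mem_grid hxp (hQ.symm ▸ hxQ)).resolve_right fun h ↦ hap.not_ge ?_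
  have hsub := grid_subset_grid (B := Q) h
  rw [hQ] at hsub
  exact (essInfQ_anti hδ hδn hf hsub).trans ha

lemma Cube.IsHigh.grid_subset (hp : Q.IsHigh δ f a p) (hδ : 0 < δ) (hδn : δ ≤ n)
    (hf : ∀ x, 0 ≤ f x) (ha : essInfQ n δ f Q ≤ a) : (Q.grid p).toSet ⊆ Q.toSet := by
  have hsub := grid_subset_grid (B := Q) (hp.le_gridIndex hδ hδn hf ha)
  rwa [grid_gridIndex_zero_corner] at hsub

lemma hContent_grid_le_of_not_isHigh (hδ : 0 < δ)
    (hρ : ∀ P : Cube n,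
      hContent n δ {x | x ∈ P.toSet ∧ essInfQ n δ f P + l < f x} ≤ ρ * P.size δ)
    (hp : ¬ Q.IsHigh δ f a p) :
    hContent n δ ((Q.grid p).toSet ∩ {x | x ∈ Q.toSet ∧ a + l < f x}) ≤
      ρ * (Q.grid p).size δ := by
  by_cases! hpQ : ((Q.grid p).toSet ∩ Q.toSet).Nonempty
  · have hap : essInfQ n δ f (Q.grid p) ≤ a := not_lt.1 fun h ↦ hp ⟨hpQ, h⟩
    refine (hContent_mono ?_).trans (hρ _)
    exact fun x hx ↦ ⟨hx.1, by linarith [hx.2.2]⟩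
  · refine (hContent_mono fun x hx ↦ hpQ.subset ⟨hx.1, hx.2.1⟩).trans ?_
    simp only [hContent_empty hδ, zero_le]

lemma hContent_grid_le_of_mem_stopping (hδ : 0 < δ)
    (hρ : ∀ P : Cube n,
      hContent n δ {x | x ∈ P.toSet ∧ essInfQ n δ f P + l < f x} ≤ ρ * P.size δ)
    (hp : p ∈ DyadicIndex.stopping (Q.IsHigh δ f a) S) :
    hContent n δ ((Q.grid p).toSet ∩ {x | x ∈ Q.toSet ∧ a + l < f x}) ≤
      ρ * (ENNReal.ofReal (2 ^ δ) * (Q.grid p).size δ) := by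
  have hlt := p.lt_parent
  calc hContent n δ ((Q.grid p).toSet ∩ {x | x ∈ Q.toSet ∧ a + l < f x})
      ≤ hContent n δ ((Q.grid (p.ancestor 1)).toSet ∩ {x | x ∈ Q.toSet ∧ a + l < f x}) :=
        hContent_mono (inter_subset_inter_left _ (Cube.grid_subset_grid hlt.le))
    _ ≤ ρ * (Q.grid (p.ancestor 1)).size δ :=
        hContent_grid_le_of_not_isHigh hδ hρ (hp.1.not_prop_of_gt hlt)
    _ ≤ ρ * (ENNReal.ofReal (2 ^ δ) * (Q.grid p).size δ) := by
        gcongr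
        refine Cube.size_le_mul hδ.le two_pos.le (le_of_eq ?_)
        simp only [Cube.side_grid, DyadicIndex.ancestor, Nat.cast_one,
          zpow_add_one₀ (two_ne_zero' ℝ)]
        ring

lemma tsum_stopping_isHigh_le (hδ : 0 < δ) (hδn : δ ≤ n) (hf : ∀ x, 0 ≤ f x)
    (ha : essInfQ n δ f Q ≤ a)
    (hS : {x | x ∈ Q.toSet ∧ a < f x} ⊆ ⋃ s ∈ S, (Q.grid s).toSet) :
    ∑' p : DyadicIndex.stopping (Q.IsHigh δ f a) S, (Q.grid p).size δ ≤
      ∑' s : S, (Q.grid s).size δ := by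
  rw [← one_mul (∑' p : DyadicIndex.stopping (Q.IsHigh δ f a) S, (Q.grid p).size δ)]
  refine mul_tsum_stopping_le hδ hS fun p hp ↦ ?_
  have hhigh := hp.1.prop
  rw [one_mul, ← hContent_cube hδ hδn]
  calc hContent n δ (Q.grid p).toSet
      ≤ hContent n δ ({x | x ∈ (Q.grid p).toSet ∧ f x < essInfQ n δ f (Q.grid p)} ∪
          (Q.grid p).toSet ∩ {x | x ∈ Q.toSet ∧ a < f x}) :=
        hContent_mono fun x hx ↦ (lt_or_ge (f x) (essInfQ n δ f (Q.grid p))).imp (⟨hx, ·⟩)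
          fun h ↦ ⟨hx, hhigh.grid_subset hδ hδn hf ha hx, hhigh.2.trans_le h⟩
    _ ≤ hContent n δ ((Q.grid p).toSet ∩ {x | x ∈ Q.toSet ∧ a < f x}) := by
        refine (hContent_union_le hδ _ _).trans ?_
        rw [hContent_lt_essInfQ_eq_zero hδ hf, zero_add]

lemma hContent_lt_add_le (hδ : 0 < δ) (hδn : δ ≤ n) (hf : ∀ x, 0 ≤ f x) (hl : 0 ≤ l)
    (hρ : ∀ P : Cube n,
      hContent n δ {x | x ∈ P.toSet ∧ essInfQ n δ f P + l < f x} ≤ ρ * P.size δ)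
    (ha : essInfQ n δ f Q ≤ a) {t : ℝ≥0∞} (ht : hContent n δ {x | x ∈ Q.toSet ∧ a < f x} < t) :
    hContent n δ {x | x ∈ Q.toSet ∧ a + l < f x} ≤
      ρ * (1 + ENNReal.ofReal (2 ^ δ)) * dyadicConst n δ * t := by
  obtain ⟨S, hS, hSt⟩ := exists_dyadic_cover hδ.le Q ht
  set T := DyadicIndex.stopping (Q.IsHigh δ f a) S
  set S' := {s | s ∈ S ∧ ¬ Q.IsHigh δ f a s}
  set G := {x | x ∈ Q.toSet ∧ a + l < f x}
  have hcover : G ⊆ (⋃ s ∈ S', (Q.grid s).toSet ∩ G) ∪ ⋃ p ∈ T, (Q.grid p).toSet ∩ G := by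
    intro x hx
    obtain ⟨s, hs, hxs⟩ := mem_iUnion₂.1 (hS ⟨hx.1, by linarith [hx.2]⟩)
    by_cases hhigh : Q.IsHigh δ f a s
    · rcases DyadicIndex.exists_le_stopping_or (fun q hq ↦ DyadicIndex.level_mono
        (Cube.IsHigh.le_gridIndex hq hδ hδn hf ha)) S hhigh with ⟨p, hp, hsp⟩ | ⟨r, hr, hr', hsr⟩
      · exact .inr (mem_biUnion hp ⟨Cube.grid_subset_grid hsp hxs, hx⟩)
      · exact .inl (mem_biUnion ⟨hr, hr'⟩ ⟨Cube.grid_subset_grid hsr hxs, hx⟩)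
    · exact .inl (mem_biUnion ⟨hs, hhigh⟩ ⟨hxs, hx⟩)
  calc hContent n δ G
      ≤ ∑' s : S', ρ * (Q.grid s).size δ +
          ∑' p : T, ρ * (ENNReal.ofReal (2 ^ δ) * (Q.grid p).size δ) := by
        refine (hContent_mono hcover).trans ((hContent_union_le hδ _ _).trans (add_le_add ?_ ?_))
        · exact (hContent_biUnion_le hδ S'.to_countable _).trans
            (ENNReal.tsum_le_tsum fun s ↦ hContent_grid_le_of_not_isHigh hδ hρ s.2.2)
        · exact (hContent_biUnion_le hδ T.to_countable _).trans
            (ENNReal.tsum_le_tsum fun p ↦ hContent_grid_le_of_mem_stopping hδ hρ p.2)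
    _ ≤ ρ * ∑' s : S, (Q.grid s).size δ +
          ρ * (ENNReal.ofReal (2 ^ δ) * ∑' s : S, (Q.grid s).size δ) := by
        simp only [ENNReal.tsum_mul_left]
        gcongr ρ * ?_ + ρ * (_ * ?_)
        · exact ENNReal.tsum_mono_subtype (fun s ↦ (Q.grid s).size δ) fun s hs ↦ hs.1
        · exact tsum_stopping_isHigh_le hδ hδn hf ha hS
    _ ≤ ρ * (dyadicConst n δ * t) +
          ρ * (ENNReal.ofReal (2 ^ δ) * (dyadicConst n δ * t)) := by gcongr
    _ = ρ * (1 + ENNReal.ofReal (2 ^ δ)) * dyadicConst n δ * t := by ring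

lemma exists_hContent_essInfQ_add_lt_le (hδ : 0 < δ) (hδn : δ ≤ n) (hblo : bloNorm n δ f ≠ ⊤)
    (hρ0 : ρ ≠ 0) (hρ : ρ ≠ ⊤) :
    ∃ l : ℝ, 0 < l ∧ ∀ Q : Cube n,
      hContent n δ {x | x ∈ Q.toSet ∧ essInfQ n δ f Q + l < f x} ≤ ρ * Q.size δ := by
  obtain ⟨N, hN⟩ := ENNReal.exists_nat_gt (ENNReal.div_ne_top hblo hρ0)
  have hN0 : (0 : ℝ) < N := Nat.cast_pos.2 (Nat.cast_pos.1 (bot_le.trans_lt hN))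
  have hl0 : ENNReal.ofReal N ≠ 0 := (ENNReal.ofReal_pos.2 hN0).ne'
  refine ⟨N, hN0, fun Q ↦ (ENNReal.mul_le_mul_iff_right hl0 ENNReal.ofReal_ne_top).1 ?_⟩
  calc ENNReal.ofReal N * hContent n δ {x | x ∈ Q.toSet ∧ essInfQ n δ f Q + N < f x}
      ≤ ENNReal.ofReal N * hContent n δ {x | x ∈ Q.toSet ∧ N < |f x - essInfQ n δ f Q|} := by
        gcongr
        exact hContent_mono fun x hx ↦ ⟨hx.1, (lt_sub_iff_add_lt'.2 hx.2).trans_le (le_abs_self _)⟩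
    _ ≤ integH n δ (fun x ↦ |f x - essInfQ n δ f Q|) Q.toSet :=
        ofReal_mul_hContent_le_integH _ _ _
    _ ≤ bloNorm n δ f * Q.size δ := integH_sub_essInfQ_le hδ hδn f Q
    _ ≤ N * ρ * Q.size δ := by
        gcongr
        exact (ENNReal.div_le_iff hρ0 hρ).1 hN.le
    _ = ENNReal.ofReal N * (ρ * Q.size δ) := by rw [ENNReal.ofReal_natCast, mul_assoc]

lemma exists_two_mul_hContent_lt_add_le (hδ : 0 < δ) (hδn : δ ≤ n) (hf : ∀ x, 0 ≤ f x)
    (hblo : bloNorm n δ f ≠ ⊤) :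
    ∃ l : ℝ, 0 < l ∧ ∀ (Q : Cube n) (a : ℝ), essInfQ n δ f Q ≤ a →
      2 * hContent n δ {x | x ∈ Q.toSet ∧ a + l < f x} ≤
        hContent n δ {x | x ∈ Q.toSet ∧ a < f x} := by
  set D := 2 * ((1 + ENNReal.ofReal (2 ^ δ)) * dyadicConst n δ)
  have hD0 : D ≠ 0 := by simp [D, dyadicConst_ne_zero]
  have hD : D ≠ ⊤ := ENNReal.mul_ne_top (by simp) (ENNReal.mul_ne_top (by simp) dyadicConst_ne_top)
  obtain ⟨l, hl0, hl⟩ := exists_hContent_essInfQ_add_lt_le hδ hδn hblo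
    (ENNReal.inv_ne_zero.2 hD) (ENNReal.inv_ne_top.2 hD0)
  refine ⟨l, hl0, fun Q a ha ↦ le_of_forall_gt_imp_ge_of_dense fun t ht ↦ ?_⟩
  calc 2 * hContent n δ {x | x ∈ Q.toSet ∧ a + l < f x}
      ≤ 2 * (D⁻¹ * (1 + ENNReal.ofReal (2 ^ δ)) * dyadicConst n δ * t) := by
        gcongr
        exact hContent_lt_add_le hδ hδn hf hl0.le hl ha ht
    _ = D * D⁻¹ * t := by ring
    _ = t := by rw [ENNReal.mul_inv_cancel hD0 hD, one_mul]

/-- The John–Nirenberg inequality for `f` on every cube. The rate of decay is written as `2 * ε` so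
that `exp (ε * f)` is integrable with room to spare. -/
def JohnNirenberg (n : ℕ) (δ ε : ℝ) (f : (Fin n → ℝ) → ℝ) : Prop :=
  ∀ (Q : Cube n) (s : ℝ), 0 ≤ s → hContent n δ {x | x ∈ Q.toSet ∧ essInfQ n δ f Q + s < f x} ≤
    ENNReal.ofReal (2 * Real.exp (-(2 * ε * s))) * Q.size δ

lemma two_pow_mul_hContent_le (hδ : 0 < δ) (hl : 0 ≤ l)
    (hhalf : ∀ a : ℝ, essInfQ n δ f Q ≤ a → 2 * hContent n δ {x | x ∈ Q.toSet ∧ a + l < f x} ≤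
      hContent n δ {x | x ∈ Q.toSet ∧ a < f x}) (m : ℕ) :
    2 ^ m * hContent n δ {x | x ∈ Q.toSet ∧ essInfQ n δ f Q + m * l < f x} ≤ Q.size δ := by
  induction m with
  | zero =>
    rw [pow_zero, one_mul]
    exact (hContent_mono fun x hx ↦ hx.1).trans (hContent_cube_le hδ Q)
  | succ m ih =>
    refine le_trans ?_ ih
    have hstep := hhalf (essInfQ n δ f Q + m * l) (le_add_of_nonneg_right (by positivity))
    rw [pow_succ, mul_assoc, Nat.cast_succ, add_one_mul, ← add_assoc]
    gcongr

lemma inv_two_pow_floor_le_exp (hl : 0 < l) {s : ℝ} :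
    ((2 : ℝ) ^ ⌊s / l⌋₊)⁻¹ ≤ 2 * Real.exp (-(2 * (Real.log 2 / (2 * l)) * s)) := by
  have hlog : 0 < Real.log 2 := Real.log_pos one_lt_two
  have hfloor := (Nat.lt_floor_add_one (s / l)).le
  calc ((2 : ℝ) ^ ⌊s / l⌋₊)⁻¹ = Real.exp (-(Real.log 2 * ⌊s / l⌋₊)) := by
        rw [Real.exp_neg, ← Real.rpow_def_of_pos two_pos, Real.rpow_natCast]
    _ ≤ Real.exp (Real.log 2 + -(Real.log 2 * (s / l))) := Real.exp_le_exp.2 (by nlinarith)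
    _ = 2 * Real.exp (-(2 * (Real.log 2 / (2 * l)) * s)) := by
        rw [Real.exp_add, Real.exp_log two_pos]
        congr 2
        field_simp

theorem exists_johnNirenberg (hδ : 0 < δ) (hδn : δ ≤ n) (hf : ∀ x, 0 ≤ f x)
    (hblo : bloNorm n δ f ≠ ⊤) : ∃ ε : ℝ, 0 < ε ∧ JohnNirenberg n δ ε f := by
  obtain ⟨l, hl0, hl⟩ := exists_two_mul_hContent_lt_add_le hδ hδn hf hblo
  refine ⟨Real.log 2 / (2 * l), by positivity, fun Q s hs ↦ ?_⟩
  set m := ⌊s / l⌋₊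
  have hm : m * l ≤ s := (le_div_iff₀ hl0).1 (Nat.floor_le (by positivity))
  calc hContent n δ {x | x ∈ Q.toSet ∧ essInfQ n δ f Q + s < f x}
      ≤ hContent n δ {x | x ∈ Q.toSet ∧ essInfQ n δ f Q + m * l < f x} :=
        hContent_mono fun x hx ↦ ⟨hx.1, by linarith [hx.2]⟩
    _ ≤ (2 ^ m)⁻¹ * Q.size δ :=
        (ENNReal.mul_le_iff_le_inv (by simp) (by simp)).1
          (two_pow_mul_hContent_le hδ hl0.le (hl Q) m)
    _ ≤ ENNReal.ofReal (2 * Real.exp (-(2 * (Real.log 2 / (2 * l)) * s))) * Q.size δ := by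
        gcongr
        rw [← ENNReal.ofReal_ofNat 2, ← ENNReal.ofReal_pow two_pos.le,
          ← ENNReal.ofReal_inv_of_pos (by positivity)]
        exact ENNReal.ofReal_le_ofReal (inv_two_pow_floor_le_exp hl0)

end JohnNirenberg

section MaximalOperator

variable {n : ℕ} {δ : ℝ} {f g u : (Fin n → ℝ) → ℝ} {x : Fin n → ℝ} {Q : Cube n}

lemma maxOp_le_iff (hδ : 0 < δ) (hδn : δ ≤ n) {c : ℝ≥0∞} :
    maxOp n δ g x ≤ c ↔
      ∀ Q : Cube n, x ∈ Q.toSet → integH n δ (fun y ↦ |g y|) Q.toSet ≤ c * Q.size δ := by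
  simp only [maxOp, iSup_le_iff, hContent_cube hδ hδn,
    ENNReal.div_le_iff (Cube.size_ne_zero _) (Cube.size_ne_top _)]

lemma integH_le_maxOp (hδ : 0 < δ) (hδn : δ ≤ n) (hx : x ∈ Q.toSet) :
    integH n δ (fun y ↦ |g y|) Q.toSet ≤ maxOp n δ g x * Q.size δ :=
  (maxOp_le_iff hδ hδn).1 le_rfl Q hx

lemma integH_le_maxOp_of_dist (hδ : 0 < δ) (hδn : δ ≤ n) (hx : x ∈ Q.toSet) (y : Fin n → ℝ) :
    integH n δ (fun z ↦ |g z|) Q.toSet ≤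
      ENNReal.ofReal ((1 + 2 * dist x y / Q.side) ^ δ) * maxOp n δ g y * Q.size δ := by
  have hQ := Q.side_pos
  set t := 1 + 2 * dist x y / Q.side with ht_def
  have ht : 1 ≤ t := le_add_of_nonneg_right (by positivity)
  have hy : y ∈ (Q.dilate t (zero_lt_one.trans_le ht)).toSet :=
    Cube.mem_dilate_of_dist_le _ hx (le_of_eq (by rw [ht_def]; field_simp; ring))
  calc integH n δ (fun z ↦ |g z|) Q.toSet
      ≤ integH n δ (fun z ↦ |g z|) (Q.dilate t (zero_lt_one.trans_le ht)).toSet :=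
        integH_mono (Q.subset_dilate ht) fun _ _ ↦ le_rfl
    _ ≤ maxOp n δ g y * (Q.dilate t (zero_lt_one.trans_le ht)).size δ :=
        integH_le_maxOp hδ hδn hy
    _ = _ := by rw [Cube.size_dilate]; ring

lemma tendsto_one_add_dist_rpow (hδ : 0 < δ) (x : Fin n → ℝ) (r : ℝ) (c : ℝ≥0∞) (hc : c ≠ ⊤) :
    Filter.Tendsto (fun y ↦ ENNReal.ofReal ((1 + 2 * dist x y / r) ^ δ) * c) (nhds x) (nhds c) := by
  have hcont : Continuous fun y ↦ (1 + 2 * dist x y / r) ^ δ :=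
    Continuous.rpow_const (by fun_prop) fun _ ↦ .inr hδ.le
  simpa using ENNReal.Tendsto.mul_const ((ENNReal.continuous_ofReal.comp hcont).tendsto x)
    (.inr hc)

lemma lowerSemicontinuous_maxOp (hδ : 0 < δ) (hδn : δ ≤ n) (g : (Fin n → ℝ) → ℝ) :
    LowerSemicontinuous (maxOp n δ g) := by
  intro x c hc
  obtain ⟨Q, hxQ, hQ⟩ : ∃ Q : Cube n, x ∈ Q.toSet ∧
      c * Q.size δ < integH n δ (fun y ↦ |g y|) Q.toSet := by
    contrapose! hc
    exact (maxOp_le_iff hδ hδn).2 hc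
  filter_upwards [(tendsto_one_add_dist_rpow hδ x Q.side _
    (ENNReal.mul_ne_top hc.ne_top Q.size_ne_top)).eventually_lt_const hQ] with y hy
  by_contra! hle
  refine (integH_le_maxOp_of_dist hδ hδn hxQ y).not_gt (lt_of_le_of_lt ?_ hy)
  rw [mul_assoc]
  gcongr

lemma eventually_integH_le_of_le_side (hδ : 0 < δ) (hδn : δ ≤ n) (hx : maxOp n δ g x ≠ ⊤)
    {r : ℝ} (hr : 0 < r) {c : ℝ≥0∞} (hc : maxOp n δ g x < c) :
    ∀ᶠ y in nhds x, ∀ Q : Cube n, y ∈ Q.toSet → r ≤ Q.side →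
      integH n δ (fun z ↦ |g z|) Q.toSet ≤ c * Q.size δ := by
  filter_upwards [(tendsto_one_add_dist_rpow hδ x r _ hx).eventually_lt_const hc] with y hy Q hyQ hQ
  refine (integH_le_maxOp_of_dist hδ hδn hyQ x).trans (mul_le_mul_left ?_ _)
  refine le_trans ?_ hy.le
  have hQ0 := Q.side_pos
  rw [dist_comm]
  gcongr

lemma ApproxContinuousAt.comp {φ : ℝ → ℝ} (hφ : ContinuousAt φ (u x))
    (hu : ApproxContinuousAt n δ u x) : ApproxContinuousAt n δ (fun y ↦ φ (u y)) x := by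
  intro η hη θ hθ
  obtain ⟨ξ, hξ, hφξ⟩ := Metric.continuousAt_iff.1 hφ η hη
  obtain ⟨r, hr, hsmall⟩ := hu ξ hξ θ hθ
  refine ⟨r, hr, fun Q hxQ hQr ↦ (hContent_mono ?_).trans (hsmall Q hxQ hQr)⟩
  exact fun y hy ↦ ⟨hy.1, le_of_not_gt fun hlt ↦ (hφξ hlt).not_ge hy.2⟩

theorem ApproxContinuousAt.ofReal_abs_le_maxOp (hg : ApproxContinuousAt n δ g x) (hδ : 0 < δ)
    (hδn : δ ≤ n) : ENNReal.ofReal |g x| ≤ maxOp n δ g x := by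
  rw [← mul_one (ENNReal.ofReal |g x|)]
  refine ENNReal.mul_le_of_forall_lt fun t ht c hc ↦ ?_
  have htg : t.toReal < |g x| := (ENNReal.lt_ofReal_iff_toReal_lt ht.ne_top).1 ht
  obtain ⟨R, hxR, -, hR⟩ := hg.exists_subcube hδ hδn (Q := ⟨x, 1, one_pos⟩) (Cube.corner_mem _)
    (sub_pos.2 htg) hc
  have hsub : R.toSet ∩ {y | |g y - g x| < |g x| - t.toReal} ⊆
      {y | y ∈ R.toSet ∧ t.toReal < |g y|} := fun y ⟨hyR, hy⟩ ↦ by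
    refine ⟨hyR, ?_⟩
    have hyx : |g y - g x| < |g x| - t.toReal := hy
    linarith [abs_sub_abs_le_abs_sub (g x) (g y), abs_sub_comm (g x) (g y)]
  rw [← ENNReal.mul_le_mul_iff_left R.size_ne_zero R.size_ne_top]
  calc t * c * R.size δ
      ≤ ENNReal.ofReal t.toReal * hContent n δ {y | y ∈ R.toSet ∧ t.toReal < |g y|} := by
        rw [ENNReal.ofReal_toReal ht.ne_top, mul_assoc]
        gcongr
        exact hR.trans (hContent_mono hsub)
    _ ≤ integH n δ (fun y ↦ |g y|) R.toSet := ofReal_mul_hContent_le_integH (fun y ↦ |g y|) _ _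
    _ ≤ maxOp n δ g x * R.size δ := integH_le_maxOp hδ hδn hxR

lemma ApproxContinuousAt.essInfQ_le (hf : ApproxContinuousAt n δ f x) (hδ : 0 < δ) (hδn : δ ≤ n)
    (hx0 : 0 ≤ f x) (hxQ : x ∈ Q.toSet) : essInfQ n δ f Q ≤ f x := by
  refine le_of_forall_pos_le_add fun η hη ↦ _root_.essInfQ_le (by positivity) ?_
  obtain ⟨R, -, hRQ, hR⟩ :=
    hf.exists_subcube hδ hδn hxQ hη (ENNReal.inv_lt_one.2 ENNReal.one_lt_two)
  have hpos : 0 < hContent n δ (R.toSet ∩ {y | |f y - f x| < η}) :=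
    (ENNReal.mul_pos (by simp) R.size_ne_zero).trans_le hR
  refine (hpos.trans_le (hContent_mono ?_)).ne'
  exact fun y hy ↦ ⟨hRQ hy.1, sub_lt_iff_lt_add'.1 (abs_lt.1 hy.2).2⟩

lemma maxOp_max_neg_zero_le_bloNorm (f : (Fin n → ℝ) → ℝ) (x : Fin n → ℝ) :
    maxOp n δ (fun y ↦ max (-f y) 0) x ≤ bloNorm n δ f := by
  refine iSup₂_le fun Q _ ↦ le_iSup_of_le Q (ENNReal.div_le_div_right ?_ _)
  refine integH_mono Subset.rfl fun y _ ↦ ?_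
  rw [abs_of_nonneg (le_max_right _ _)]
  refine max_le ?_ (abs_nonneg _)
  linarith [neg_abs_le (f y - essInfQ n δ f Q), essInfQ_nonneg (δ := δ) f Q]

-- Since `essInfQ` is never negative, finite `bloNorm` prevents `f` from being very negative.
theorem ApproxContinuousAt.neg_bloNorm_le (hf : ApproxContinuousAt n δ f x) (hδ : 0 < δ)
    (hδn : δ ≤ n) (hblo : bloNorm n δ f ≠ ⊤) : -(bloNorm n δ f).toReal ≤ f x := by
  have hneg : ApproxContinuousAt n δ (fun y ↦ max (-f y) 0) x :=
    hf.comp (φ := fun t ↦ max (-t) 0) (by fun_prop)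
  have hle := (hneg.ofReal_abs_le_maxOp hδ hδn).trans (maxOp_max_neg_zero_le_bloNorm f x)
  rw [ENNReal.ofReal_le_iff_le_toReal hblo] at hle
  linarith [le_max_left (-f x) 0, le_abs_self (max (-f x) 0)]

end MaximalOperator

section ExponentialIntegrability

variable {n : ℕ} {δ ε : ℝ} {f g : (Fin n → ℝ) → ℝ} {x : Fin n → ℝ} {Q : Cube n}
  {U : Set (Fin n → ℝ)}

lemma lintegral_Ioi_mul_rpow_neg_two {c k : ℝ} (hc : 0 < c) (hk : 0 ≤ k) :
    ∫⁻ t in Ioi c, ENNReal.ofReal (k * t ^ (-2 : ℝ)) = ENNReal.ofReal (k / c) := by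
  rw [← ofReal_integral_eq_lintegral_ofReal
    ((integrableOn_Ioi_rpow_of_lt (by norm_num) hc).const_mul k), integral_const_mul,
    integral_Ioi_rpow_of_lt (by norm_num) hc]
  · norm_num [Real.rpow_neg_one, div_eq_mul_inv]
  · refine (ae_restrict_iff' measurableSet_Ioi).2 (.of_forall fun t ht ↦ ?_)
    have : 0 < t := hc.trans ht
    positivity

lemma integH_le_of_tail (hδ : 0 < δ) {G η : ℝ} (hG : 0 < G) (hη : 0 < η) (hη1 : η ≤ 1)
    (hsmall : ∀ t, G < t →
      hContent n δ {x | x ∈ Q.toSet ∧ t < g x} ≤ ENNReal.ofReal (η ^ 2) * Q.size δ)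
    (hdecay : ∀ t, G < t →
      hContent n δ {x | x ∈ Q.toSet ∧ t < g x} ≤
        ENNReal.ofReal (2 * G ^ 2 * t ^ (-2 : ℝ)) * Q.size δ) :
    integH n δ g Q.toSet ≤ ENNReal.ofReal (G * (1 + 3 * η)) * Q.size δ := by
  have hGη : G ≤ G / η := le_div_self hG.le hη hη1
  have hlow : ∫⁻ t in Ioc 0 G, hContent n δ {x | x ∈ Q.toSet ∧ t < g x} ≤
      ENNReal.ofReal G * Q.size δ :=
    calc _ ≤ ∫⁻ _ in Ioc 0 G, Q.size δ :=
          lintegral_mono fun _ ↦ (hContent_mono fun _ hx ↦ hx.1).trans (hContent_cube_le hδ Q)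
      _ = _ := by simp [mul_comm]
  have hmid : ∫⁻ t in Ioc G (G / η), hContent n δ {x | x ∈ Q.toSet ∧ t < g x} ≤
      ENNReal.ofReal (G * η) * Q.size δ :=
    calc _ ≤ ∫⁻ _ in Ioc G (G / η), ENNReal.ofReal (η ^ 2) * Q.size δ :=
          setLIntegral_mono' measurableSet_Ioc fun t ht ↦ hsmall t ht.1
      _ = ENNReal.ofReal (η ^ 2) * Q.size δ * ENNReal.ofReal (G / η - G) := by simp
      _ ≤ ENNReal.ofReal (η ^ 2) * Q.size δ * ENNReal.ofReal (G / η) := by gcongr; linarith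
      _ = _ := by
          rw [mul_right_comm, ← ENNReal.ofReal_mul (by positivity)]
          congr 2
          field_simp
  have hhigh : ∫⁻ t in Ioi (G / η), hContent n δ {x | x ∈ Q.toSet ∧ t < g x} ≤
      ENNReal.ofReal (G * (2 * η)) * Q.size δ :=
    calc _ ≤ ∫⁻ t in Ioi (G / η), ENNReal.ofReal (2 * G ^ 2 * t ^ (-2 : ℝ)) * Q.size δ :=
          setLIntegral_mono' measurableSet_Ioi fun t ht ↦ hdecay t (hGη.trans_lt ht)
      _ = ENNReal.ofReal (2 * G ^ 2 / (G / η)) * Q.size δ := by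
          rw [lintegral_mul_const' _ _ Q.size_ne_top,
            lintegral_Ioi_mul_rpow_neg_two (by positivity) (by positivity)]
      _ = _ := by
          congr 2
          field_simp
  calc integH n δ g Q.toSet
      ≤ ENNReal.ofReal G * Q.size δ +
          (ENNReal.ofReal (G * η) * Q.size δ + ENNReal.ofReal (G * (2 * η)) * Q.size δ) := by
        rw [integH, ← Ioc_union_Ioi_eq_Ioi hG.le, ← Ioc_union_Ioi_eq_Ioi hGη]
        exact (lintegral_union_le _ _ _).trans
          (add_le_add hlow ((lintegral_union_le _ _ _).trans (add_le_add hmid hhigh)))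
    _ = _ := by
        rw [← add_mul, ← add_mul, ← ENNReal.ofReal_add (by positivity) (by positivity),
          ← ENNReal.ofReal_add (by positivity) (by positivity)]
        congr 2
        ring

lemma JohnNirenberg.hContent_exp_le (h : JohnNirenberg n δ ε f) (hε : 0 < ε) {A t : ℝ}
    (hA : essInfQ n δ f Q ≤ A) (ht : Real.exp (ε * A) < t) :
    hContent n δ {x | x ∈ Q.toSet ∧ t < |Real.exp (ε * f x)|} ≤
      ENNReal.ofReal (2 * Real.exp (ε * A) ^ 2 * t ^ (-2 : ℝ)) * Q.size δ := by
  have ht0 : 0 < t := (Real.exp_pos _).trans ht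
  have hs : 0 ≤ Real.log t / ε - A := by
    rw [sub_nonneg, le_div_iff₀' hε]
    exact (Real.le_log_iff_exp_le ht0).2 ht.le
  refine (hContent_mono ?_).trans ((h Q _ hs).trans_eq ?_)
  · rintro x ⟨hx, hlt⟩
    rw [Real.abs_exp, ← Real.log_lt_iff_lt_exp ht0, ← div_lt_iff₀' hε] at hlt
    exact ⟨hx, by linarith⟩
  · rw [Real.rpow_def_of_pos ht0, ← Real.exp_nat_mul, mul_assoc 2 (Real.exp _), ← Real.exp_add]
    congr 4
    field_simp
    ring

lemma JohnNirenberg.integH_exp_le (h : JohnNirenberg n δ ε f) (hδ : 0 < δ) (hε : 0 < ε) {A : ℝ}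
    (hA : essInfQ n δ f Q ≤ A) :
    integH n δ (fun x ↦ |Real.exp (ε * f x)|) Q.toSet ≤
      ENNReal.ofReal (4 * Real.exp (ε * A)) * Q.size δ := by
  refine (integH_le_of_tail hδ (Real.exp_pos _) one_pos le_rfl (fun t _ ↦ ?_)
    fun t ht ↦ h.hContent_exp_le hε hA ht).trans_eq ?_
  · rw [one_pow, ENNReal.ofReal_one, one_mul]
    exact (hContent_mono fun _ hx ↦ hx.1).trans (hContent_cube_le hδ Q)
  · congr 2
    ring

lemma JohnNirenberg.maxOp_exp_le (h : JohnNirenberg n δ ε f) (hδ : 0 < δ) (hδn : δ ≤ n)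
    (hε : 0 < ε) (hx0 : 0 ≤ f x) (hx : ApproxContinuousAt n δ f x) :
    maxOp n δ (fun y ↦ Real.exp (ε * f y)) x ≤ ENNReal.ofReal (4 * Real.exp (ε * f x)) :=
  (maxOp_le_iff hδ hδn).2 fun _ hxQ ↦ h.integH_exp_le hδ hε (hx.essInfQ_le hδ hδn hx0 hxQ)

lemma ApproxContinuousAt.ofReal_exp_le_maxOp (hf : ApproxContinuousAt n δ f x) (hδ : 0 < δ)
    (hδn : δ ≤ n) (ε : ℝ) :
    ENNReal.ofReal (Real.exp (ε * f x)) ≤ maxOp n δ (fun y ↦ Real.exp (ε * f y)) x := by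
  have hexp : ApproxContinuousAt n δ (fun y ↦ Real.exp (ε * f y)) x :=
    hf.comp (φ := fun t ↦ Real.exp (ε * t)) (by fun_prop)
  simpa only [Real.abs_exp] using hexp.ofReal_abs_le_maxOp hδ hδn

lemma JohnNirenberg.log_maxOp_exp_mem_Icc (h : JohnNirenberg n δ ε f) (hδ : 0 < δ) (hδn : δ ≤ n)
    (hε : 0 < ε) (hx0 : 0 ≤ f x) (hx : ApproxContinuousAt n δ f x) :
    Real.log (maxOp n δ (fun y ↦ Real.exp (ε * f y)) x).toReal ∈
      Icc (ε * f x) (ε * f x + Real.log 4) := by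
  have hle := h.maxOp_exp_le hδ hδn hε hx0 hx
  have hge := (ENNReal.ofReal_le_iff_le_toReal (ne_top_of_le_ne_top ENNReal.ofReal_ne_top hle)).1
    (hx.ofReal_exp_le_maxOp hδ hδn ε)
  have hpos := (Real.exp_pos _).trans_le hge
  refine ⟨(Real.le_log_iff_exp_le hpos).2 hge, ?_⟩
  rw [Real.log_le_iff_le_exp hpos, Real.exp_add, Real.exp_log four_pos, mul_comm]
  exact ENNReal.toReal_le_of_le_ofReal (by positivity) hle

lemma exists_exp_mul_lt (ε : ℝ) {τ : ℝ} (hτ : 1 < τ) :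
    ∃ η : ℝ, 0 < η ∧ η ≤ 1 ∧ Real.exp (ε * η) * (1 + 3 * η) < τ := by
  have hcont : Continuous fun t : ℝ ↦ Real.exp (ε * t) * (1 + 3 * t) := by fun_prop
  have hlim := ((hcont.tendsto 0).mono_left (nhdsWithin_le_nhds (s := Ioi 0))).eventually_lt_const
    (show Real.exp (ε * 0) * (1 + 3 * 0) < τ by simpa using hτ)
  obtain ⟨η, hη, hη01⟩ := (hlim.and (Ioc_mem_nhdsGT one_pos)).exists
  exact ⟨η, hη01.1, hη01.2, hη⟩

lemma ThinlyDiscontinuous.exists_forall_integH_exp_le (hU : ThinlyDiscontinuous n δ f U)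
    (h : JohnNirenberg n δ ε f) (hδ : 0 < δ) (hδn : δ ≤ n) (hε : 0 < ε) (hf : ∀ y, 0 ≤ f y)
    (hx : x ∉ U) {τ : ℝ} (hτ : 1 < τ) :
    ∃ r : ℝ, 0 < r ∧ ∀ y ∉ U, dist y x < r → ∀ Q : Cube n, y ∈ Q.toSet → Q.side < r →
      integH n δ (fun z ↦ |Real.exp (ε * f z)|) Q.toSet ≤
        ENNReal.ofReal (τ * Real.exp (ε * f x)) * Q.size δ := by
  obtain ⟨η, hη, hη1, hητ⟩ := exists_exp_mul_lt ε hτ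
  obtain ⟨O, hOU, hcont, hO⟩ := hU (ENNReal.ofReal (η ^ 2)) (by simpa using hη.ne')
  obtain ⟨r, hr, hnear⟩ := Metric.continuousOn_iff.1 hcont x (fun hxO ↦ hx (hOU hxO)) η hη
  have hupper : ∀ z ∉ O, dist z x < r → f z ≤ f x + η := fun z hzO hz ↦ by
    linarith [(abs_lt.1 (Real.dist_eq _ _ ▸ hnear z hzO hz)).2]
  refine ⟨r / 2, half_pos hr, fun y hy hyx Q hyQ hQ ↦ ?_⟩
  have hA : essInfQ n δ f Q ≤ f x + η :=
    ((hU.approxContinuousAt hy).essInfQ_le hδ hδn (hf y) hyQ).trans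
      (hupper y (fun hyO ↦ hy (hOU hyO)) (hyx.trans (half_lt_self hr)))
  have hsub : ∀ t, Real.exp (ε * (f x + η)) < t →
      {z | z ∈ Q.toSet ∧ t < |Real.exp (ε * f z)|} ⊆ Q.toSet ∩ O := by
    rintro t ht z ⟨hzQ, hz⟩
    refine ⟨hzQ, by_contra fun hzO ↦ ?_⟩
    rw [Real.abs_exp] at hz
    have hlt : f x + η < f z := lt_of_mul_lt_mul_left (Real.exp_lt_exp.1 (ht.trans hz)) hε.le
    refine (hupper z hzO ?_).not_gt hlt
    linarith [dist_triangle z y x, Cube.dist_lt_side hzQ hyQ]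
  refine (integH_le_of_tail hδ (Real.exp_pos _) hη hη1
    (fun t ht ↦ (hContent_mono (hsub t ht)).trans (hO y hy Q hyQ))
    fun t ht ↦ h.hContent_exp_le hε hA ht).trans ?_
  gcongr ENNReal.ofReal ?_ * _
  calc Real.exp (ε * (f x + η)) * (1 + 3 * η)
      = Real.exp (ε * η) * (1 + 3 * η) * Real.exp (ε * f x) := by rw [mul_add ε, Real.exp_add]; ring
    _ ≤ τ * Real.exp (ε * f x) := by gcongr

lemma ThinlyDiscontinuous.continuousOn_maxOp_exp (hU : ThinlyDiscontinuous n δ f U)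
    (h : JohnNirenberg n δ ε f) (hδ : 0 < δ) (hδn : δ ≤ n) (hε : 0 < ε) (hf : ∀ y, 0 ≤ f y) :
    ContinuousOn (maxOp n δ fun y ↦ Real.exp (ε * f y)) Uᶜ := by
  intro x hxU
  set M := maxOp n δ fun y ↦ Real.exp (ε * f y)
  have hx := hU.approxContinuousAt hxU
  have hge : ENNReal.ofReal (Real.exp (ε * f x)) ≤ M x := hx.ofReal_exp_le_maxOp hδ hδn ε
  have htop : M x ≠ ⊤ :=
    ne_top_of_le_ne_top ENNReal.ofReal_ne_top (h.maxOp_exp_le hδ hδn hε (hf x) hx)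
  refine tendsto_order.2 ⟨fun c hc ↦
    nhdsWithin_le_nhds (lowerSemicontinuous_maxOp hδ hδn _ x c hc), fun c hc ↦ ?_⟩
  obtain ⟨c', hMc', hc'c⟩ := exists_between hc
  obtain ⟨τ, hτ, hτc⟩ : ∃ τ : ℝ, 1 < τ ∧ ENNReal.ofReal (τ * Real.exp (ε * f x)) < c' := by
    have hcont : Continuous fun τ : ℝ ↦ ENNReal.ofReal (τ * Real.exp (ε * f x)) :=
      ENNReal.continuous_ofReal.comp (by fun_prop)
    have hlim := (hcont.tendsto 1).mono_left (nhdsWithin_le_nhds (s := Ioi 1))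
    rw [one_mul] at hlim
    obtain ⟨τ, hτc, hτ⟩ := ((hlim.eventually_lt_const (hge.trans_lt hMc')).and
      self_mem_nhdsWithin).exists
    exact ⟨τ, hτ, hτc⟩
  obtain ⟨r, hr, hsmall⟩ := hU.exists_forall_integH_exp_le h hδ hδn hε hf hxU hτ
  filter_upwards [self_mem_nhdsWithin, nhdsWithin_le_nhds (Metric.ball_mem_nhds x hr),
    nhdsWithin_le_nhds (eventually_integH_le_of_le_side hδ hδn htop hr hMc')] with y hyU hyr hlarge
  refine ((maxOp_le_iff hδ hδn).2 fun Q hyQ ↦ ?_).trans_lt hc'c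
  rcases le_or_gt r Q.side with hQ | hQ
  · exact hlarge Q hyQ hQ
  · exact (hsmall y hyU hyr Q hyQ hQ).trans (mul_le_mul_left hτc.le _)

theorem QuasiCont.log_maxOp_exp (hq : QuasiCont n δ f) (h : JohnNirenberg n δ ε f) (hδ : 0 < δ)
    (hδn : δ ≤ n) (hε : 0 < ε) (hf : ∀ y, 0 ≤ f y) :
    QuasiCont n δ fun x ↦ Real.log (maxOp n δ (fun y ↦ Real.exp (ε * f y)) x).toReal := by
  intro e he
  obtain ⟨U, hUo, hUe, hU⟩ := hq.exists_thinlyDiscontinuous hδ (ENNReal.ofReal_pos.2 he).ne'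
  refine ⟨U, hUo, hUe, fun x hx ↦ ?_⟩
  have happrox := hU.approxContinuousAt hx
  have htop := ne_top_of_le_ne_top ENNReal.ofReal_ne_top
    (h.maxOp_exp_le hδ hδn hε (hf x) happrox)
  have hpos := (ENNReal.ofReal_pos.2 (Real.exp_pos _)).trans_le
    (happrox.ofReal_exp_le_maxOp hδ hδn ε)
  exact ((ENNReal.continuousAt_toReal htop).comp_continuousWithinAt
    (hU.continuousOn_maxOp_exp h hδ hδn hε hf x hx)).log (ENNReal.toReal_pos hpos.ne' htop).ne'

end ExponentialIntegrability

section Factorization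

variable {n : ℕ} {δ ε : ℝ} {f u v : (Fin n → ℝ) → ℝ} {x : Fin n → ℝ}

lemma QuasiCont.comp_continuous {φ : ℝ → ℝ} (hφ : Continuous φ) (hu : QuasiCont n δ u) :
    QuasiCont n δ fun x ↦ φ (u x) := fun ε hε ↦
  have ⟨O, hO, hOε, hcont⟩ := hu ε hε
  ⟨O, hO, hOε, hφ.comp_continuousOn hcont⟩

lemma QuasiCont.sub (hu : QuasiCont n δ u) (hv : QuasiCont n δ v) (hδ : 0 < δ) :
    QuasiCont n δ fun x ↦ u x - v x := by
  intro ε hε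
  obtain ⟨O, hO, hOε, hcontO⟩ := hu (ε / 2) (half_pos hε)
  obtain ⟨P, hP, hPε, hcontP⟩ := hv (ε / 2) (half_pos hε)
  refine ⟨O ∪ P, hO.union hP, ?_, ?_⟩
  · calc hContent n δ (O ∪ P) ≤ hContent n δ O + hContent n δ P := hContent_union_le hδ O P
      _ < ENNReal.ofReal (ε / 2) + ENNReal.ofReal (ε / 2) := ENNReal.add_lt_add hOε hPε
      _ = ENNReal.ofReal ε := by
        rw [← ENNReal.ofReal_add (half_pos hε).le (half_pos hε).le, add_halves]
  · exact (hcontO.mono (compl_subset_compl.2 subset_union_left)).sub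
      (hcontP.mono (compl_subset_compl.2 subset_union_right))

lemma AEContent.mono {p q : (Fin n → ℝ) → Prop} (hp : AEContent n δ p) (h : ∀ x, p x → q x) :
    AEContent n δ q :=
  le_antisymm ((hContent_mono fun x ↦ mt (h x)).trans_eq hp) bot_le

lemma AEContent.of_forall {p : (Fin n → ℝ) → Prop} (hδ : 0 < δ) (hp : ∀ x, p x) :
    AEContent n δ p := by
  simp only [AEContent, hp, not_true_eq_false, ofPred_false, hContent_empty hδ]

lemma JohnNirenberg.memL1loc_exp (h : JohnNirenberg n δ ε f) (hq : QuasiCont n δ f) (hδ : 0 < δ)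
    (hε : 0 < ε) : MemL1loc n δ fun x ↦ Real.exp (ε * f x) := by
  refine ⟨hq.comp_continuous (φ := fun t ↦ Real.exp (ε * t)) (by fun_prop), fun K hK ↦ ?_⟩
  obtain ⟨Q, hKQ⟩ := Cube.exists_superset_of_isBounded hK.isBounded
  calc integH n δ (fun x ↦ |Real.exp (ε * f x)|) K
      ≤ integH n δ (fun x ↦ |Real.exp (ε * f x)|) Q.toSet := integH_mono hKQ fun _ _ ↦ le_rfl
    _ ≤ ENNReal.ofReal (4 * Real.exp (ε * essInfQ n δ f Q)) * Q.size δ :=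
        h.integH_exp_le hδ hε le_rfl
    _ < ⊤ := ENNReal.mul_lt_top ENNReal.ofReal_lt_top Q.size_ne_top.lt_top

lemma abs_sub_log_maxOp_exp_le (hblo : bloNorm n δ f ≠ ⊤)
    (h : JohnNirenberg n δ ε fun y ↦ max (f y) 0) (hδ : 0 < δ) (hδn : δ ≤ n) (hε : 0 < ε)
    (hx : ApproxContinuousAt n δ f x) :
    |f x - 1 / ε * Real.log (maxOp n δ (fun y ↦ Real.exp (ε * max (f y) 0)) x).toReal| ≤
      (bloNorm n δ f).toReal + 1 / ε * Real.log 4 := by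
  have hbelow := hx.neg_bloNorm_le hδ hδn hblo
  have hmax : max (f x) 0 ≤ f x + (bloNorm n δ f).toReal :=
    max_le (le_add_of_nonneg_right ENNReal.toReal_nonneg) (by linarith)
  have hx' : ApproxContinuousAt n δ (fun y ↦ max (f y) 0) x :=
    hx.comp (φ := fun t ↦ max t 0) (by fun_prop)
  obtain ⟨hge, hle⟩ := h.log_maxOp_exp_mem_Icc hδ hδn hε (le_max_right _ _) hx'
  set L := Real.log (maxOp n δ (fun y ↦ Real.exp (ε * max (f y) 0)) x).toReal
  have hge' : max (f x) 0 ≤ 1 / ε * L := by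
    rwa [one_div_mul_eq_div, le_div_iff₀' hε]
  have hle' : 1 / ε * L ≤ max (f x) 0 + 1 / ε * Real.log 4 := by
    rwa [one_div_mul_eq_div, one_div_mul_eq_div, div_le_iff₀' hε, mul_add, mul_div_cancel₀ _ hε.ne']
  have hnonneg : 0 ≤ 1 / ε * Real.log 4 := by positivity
  rw [abs_le]
  constructor <;> linarith [le_max_left (f x) 0, hnonneg]

lemma memLinf_sub_log_maxOp_exp (hq : QuasiCont n δ f) (hblo : bloNorm n δ f ≠ ⊤)
    (h : JohnNirenberg n δ ε fun y ↦ max (f y) 0) (hδ : 0 < δ) (hδn : δ ≤ n) (hε : 0 < ε) :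
    MemLinf n δ fun x ↦
      f x - 1 / ε * Real.log (maxOp n δ (fun y ↦ Real.exp (ε * max (f y) 0)) x).toReal := by
  have hq' : QuasiCont n δ fun y ↦ max (f y) 0 :=
    hq.comp_continuous (φ := fun t ↦ max t 0) (by fun_prop)
  have hlog := hq'.log_maxOp_exp h hδ hδn hε fun _ ↦ le_max_right _ _
  exact ⟨hq.sub (hlog.comp_continuous (continuous_const_mul (1 / ε))) hδ, _,
    (hq.ae_approxContinuousAt hδ).mono fun _ ↦ abs_sub_log_maxOp_exp_le hblo h hδ hδn hε⟩

end Factorization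

/-- factorization of BLO(ℝⁿ, ℋ^δ_∞) via the maximal operator. -/
theorem stmt9 (n : ℕ) (hn : 1 ≤ n) (δ : ℝ) (hδ0 : 0 < δ) (hδn : δ ≤ n) :
    ∀ f : (Fin n → ℝ) → ℝ, MemBLO n δ f →
      ∃ (α : ℝ) (b g : (Fin n → ℝ) → ℝ),
        0 ≤ α ∧ MemLinf n δ b ∧ MemL1loc n δ g ∧
          AEContent n δ (fun x => f x = α * Real.log (maxOp n δ g x).toReal + b x) := by
  rintro f ⟨⟨hq, -⟩, hblo⟩
  have hblo' : bloNorm n δ (fun y ↦ max (f y) 0) ≠ ⊤ :=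
    ((bloNorm_max_zero_le f).trans_lt hblo).ne
  have hq' : QuasiCont n δ fun y ↦ max (f y) 0 :=
    hq.comp_continuous (φ := fun t ↦ max t 0) (by fun_prop)
  obtain ⟨ε, hε, hJN⟩ := exists_johnNirenberg hδ0 hδn (fun _ ↦ le_max_right _ _) hblo'
  exact ⟨1 / ε, _, fun y ↦ Real.exp (ε * max (f y) 0), (one_div_pos.2 hε).le,
    memLinf_sub_log_maxOp_exp hq hblo.ne hJN hδ0 hδn hε, hJN.memL1loc_exp hq' hδ0 hε,
    .of_forall hδ0 fun _ ↦ (add_sub_cancel _ _).symm⟩
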